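/- arXiv:2111.07114 — 3 statements merged into one kernel-verified Lean document; each statement's English description precedes it below -/
import Mathlib

section
/- (Batchelor–Wood formula) Assume ∫₀^{2π}f(θ)dθ=∫₀^{2π}g(θ)dθ=0. Suppose the nonlinear steady Prandtl equations near r=1 have a solution (u_p^{(0)},v_p^{(1)}) and those near r=r_0 have a solution (û_p^{(0)},v̂_p^{(1)}) such that u_e(1)+u_p^{(0)}(θ,Y)>0 for all Y≤0, u_e(r_0)+û_p^{(0)}(θ,Z)>0 for all Z≥0, and ‖u_p^{(0)}‖_∞+‖û_p^{(0)}‖_∞≤M for some constant M>0. Then u_e(1)²=α²+(η²/2π)∫₀^{2π}f(θ)²dθ and u_e(r_0)²=β²+(η²/2π)∫₀^{2π}g(θ)²dθ. -/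
open Real MeasureTheory Filter Set

noncomputable section

/-- Partial derivative in the first (angular) variable. -/
def Dθ (u : ℝ → ℝ → ℝ) : ℝ → ℝ → ℝ := fun x y => deriv (fun t => u t y) x

/-- Partial derivative in the second (radial / boundary-layer) variable. -/
def Dr (u : ℝ → ℝ → ℝ) : ℝ → ℝ → ℝ := fun x y => deriv (fun s => u x s) y

/-- Joint smoothness of a function of two real variables. -/
def Smooth2 (u : ℝ → ℝ → ℝ) : Prop := ContDiff ℝ (⊤ : ℕ∞) (fun q : ℝ × ℝ => u q.1 q.2)

/-- `2π`-periodicity in the first (angular) variable. -/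
def Periodic2 (u : ℝ → ℝ → ℝ) : Prop := ∀ x y, u (x + 2 * π) y = u x y

/-- The profile `ũ_e(r) = ã₀ r + b̃₀/r + c̃₀ r ln r`. -/
def tildeU (ta tb tc : ℝ) : ℝ → ℝ := fun r => ta * r + tb / r + tc * r * Real.log r

/-- The shear Euler profile `u_{e,δ}(r) = a₀ r + b₀/r + δ ũ_e(r)`. -/
def shearProfile (a0 b0 δ ta tb tc : ℝ) : ℝ → ℝ :=
  fun r => a0 * r + b0 / r + δ * tildeU ta tb tc r

/-- Double integral over the annulus domain `Ω = [0,2π] × [r₀,1]`. -/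
def dblInt (r0 : ℝ) (F : ℝ → ℝ → ℝ) : ℝ :=
  ∫ r in r0..(1:ℝ), ∫ θ in (0:ℝ)..(2 * π), F θ r

/-- The nonlinear steady Prandtl system near the outer boundary `r = 1`
(boundary-layer variable `Y = (r-1)/ε ≤ 0`); `ue1` is the slip velocity `u_e(1)`. -/
def PrandtlOuter (ue1 α η : ℝ) (f : ℝ → ℝ) (u v : ℝ → ℝ → ℝ) : Prop :=
  Smooth2 u ∧ Smooth2 v ∧ Periodic2 u ∧ Periodic2 v ∧
  (∀ θ Y, Y ≤ 0 →
    (ue1 + u θ Y) * Dθ u θ Y + (v θ Y - v θ 0) * Dr u θ Y - Dr (Dr u) θ Y = 0) ∧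
  (∀ θ Y, Y ≤ 0 → Dθ u θ Y + Dr v θ Y = 0) ∧
  (∀ θ, u θ 0 = α + η * f θ - ue1) ∧
  (∀ θ, Tendsto (fun Y => u θ Y) atBot (nhds 0)) ∧
  (∀ θ, Tendsto (fun Y => v θ Y) atBot (nhds 0))

/-- The nonlinear steady Prandtl system near the inner boundary `r = r₀`
(boundary-layer variable `Z = (r-r₀)/ε ≥ 0`); `uer0` is the slip velocity `u_e(r₀)`. -/
def PrandtlInner (uer0 β η r0 : ℝ) (g : ℝ → ℝ) (u v : ℝ → ℝ → ℝ) : Prop :=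
  Smooth2 u ∧ Smooth2 v ∧ Periodic2 u ∧ Periodic2 v ∧
  (∀ θ Z, 0 ≤ Z →
    (uer0 + u θ Z) * Dθ u θ Z + (v θ Z - v θ 0) * (r0 * Dr u θ Z) - r0 * Dr (Dr u) θ Z = 0) ∧
  (∀ θ Z, 0 ≤ Z → Dθ u θ Z + r0 * Dr v θ Z = 0) ∧
  (∀ θ, u θ 0 = β + η * g θ - uer0) ∧
  (∀ θ, Tendsto (fun Z => u θ Z) atTop (nhds 0)) ∧
  (∀ θ, Tendsto (fun Z => v θ Z) atTop (nhds 0))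

/-!
In von Mises coordinates `(x, ψ)`, with `ψ = ∫₀ᶻ U` the stream function of the total velocity, the
Prandtl equation with viscosity `κ` becomes `∂ₓU = (κ / 2) ∂²_ψ(U²)`. Integrating over a period,
`W(ψ) = ∫ U² dx` has zero second derivative, so `W` is affine. Since `U` tends to the slip velocity
`e`, `W` tends to `2πe²` as `ψ → ∞`, so `W` is constant; its value at the wall `ψ = 0` is the
integral of `(α + η f)²`, which equals `2πα² + η² ∫ f²` because `f` has zero mean.
-/

lemma hasDerivAt_intervalIntegral_of_continuousOn {E : Type*} [NormedAddCommGroup E]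
    [NormedSpace ℝ E] {F F' : ℝ → ℝ → E} {S : Set ℝ} {a b s : ℝ}
    (hS : IsOpen S) (hs : s ∈ S) (hF : ∀ t ∈ S, ContinuousOn (F t) (uIcc a b))
    (hF' : ContinuousOn (Function.uncurry F') (S ×ˢ uIcc a b))
    (hderiv : ∀ t ∈ S, ∀ x ∈ uIcc a b, HasDerivAt (fun r => F r x) (F' t x) t) :
    HasDerivAt (fun t => ∫ x in a..b, F t x) (∫ x in a..b, F' s x) s := by
  obtain ⟨K, hK, hKS, hKc⟩ := local_compact_nhds (hS.mem_nhds hs)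
  obtain ⟨C, hC⟩ := (hKc.prod isCompact_uIcc).exists_bound_of_continuousOn
    (hF'.mono (prod_mono_left hKS))
  have hF's : ContinuousOn (F' s) (uIcc a b) :=
    hF'.comp (Continuous.prodMk_right s).continuousOn fun x hx => ⟨hs, hx⟩
  refine (intervalIntegral.hasDerivAt_integral_of_dominated_loc_of_deriv_le
    (bound := fun _ => C) hK ?_ (hF s hs).intervalIntegrable ?_ ?_ intervalIntegrable_const ?_).2
  · filter_upwards [hS.mem_nhds hs] with t ht
    exact (hF t ht).intervalIntegrable.aestronglyMeasurable_restrict_uIoc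
  · exact hF's.intervalIntegrable.aestronglyMeasurable_restrict_uIoc
  · exact Eventually.of_forall fun x hx t ht => hC (t, x) ⟨ht, uIoc_subset_uIcc hx⟩
  · exact Eventually.of_forall fun x hx t ht => hderiv t (hKS ht) x (uIoc_subset_uIcc hx)

lemma tendsto_atTop_of_tendsto_deriv_pos {f f' : ℝ → ℝ} {c : ℝ} (hc : 0 < c)
    (hf : ∀ᶠ x in atTop, HasDerivAt f (f' x) x) (hf' : Tendsto f' atTop (nhds c)) :
    Tendsto f atTop atTop := by
  obtain ⟨T, hT⟩ := eventually_atTop.1 (hf.and (hf'.eventually (lt_mem_nhds (half_lt_self hc))))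
  have lower : ∀ x, T ≤ x → f T + c / 2 * (x - T) ≤ f x := by
    intro x hx
    have := (convex_Ici T).mul_sub_le_image_sub_of_le_deriv
      (fun y hy => (hT y hy).1.continuousAt.continuousWithinAt)
      (fun y hy => (hT y (interior_subset hy)).1.differentiableAt.differentiableWithinAt)
      (fun y hy => ((hT y (interior_subset hy)).2.le.trans_eq
        (hT y (interior_subset hy)).1.deriv.symm)) T self_mem_Ici x hx hx
    linarith
  refine tendsto_atTop_mono' atTop ((eventually_ge_atTop T).mono lower) ?_
  exact tendsto_atTop_add_const_left _ _
    ((tendsto_id.atTop_add tendsto_const_nhds).const_mul_atTop (half_pos hc))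

lemma eq_limit_of_second_deriv_eq_zero {f f' : ℝ → ℝ} {a ℓ : ℝ}
    (hf : ∀ x ∈ Ioi a, HasDerivAt f (f' x) x) (hf' : ∀ x ∈ Ioi a, HasDerivAt f' 0 x)
    (hlim : Tendsto f atTop (nhds ℓ)) : ∀ x ∈ Ioi a, f x = ℓ := by
  obtain ⟨c, hc⟩ := isOpen_Ioi.exists_is_const_of_deriv_eq_zero isPreconnected_Ioi
    (fun x hx => (hf' x hx).differentiableAt.differentiableWithinAt) fun x hx => (hf' x hx).deriv
  have hsub : ∀ x ∈ Ioi a, HasDerivAt (fun y => f y - c * y) 0 x := fun x hx =>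
    ((hf x hx).sub ((hasDerivAt_id x).const_mul c)).congr_deriv (by rw [hc x hx]; ring)
  obtain ⟨d, hd⟩ := isOpen_Ioi.exists_is_const_of_deriv_eq_zero isPreconnected_Ioi
    (fun x hx => (hsub x hx).differentiableAt.differentiableWithinAt) fun x hx => (hsub x hx).deriv
  have slope_eq : ∀ᶠ x in atTop, f (x + 1) - f x = c := by
    filter_upwards [eventually_gt_atTop a] with x hx
    have h₀ := hd x hx
    have h₁ := hd (x + 1) (lt_add_of_lt_of_pos hx one_pos)
    linarith
  have slope_zero : Tendsto (fun x => f (x + 1) - f x) atTop (nhds (ℓ - ℓ)) :=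
    (hlim.comp (tendsto_atTop_add_const_right _ 1 tendsto_id)).sub hlim
  have c_zero : c = 0 := by
    simpa using tendsto_nhds_unique (tendsto_const_nhds.congr' (slope_eq.mono fun _ h => h.symm))
      slope_zero
  have const_eq : ∀ x ∈ Ioi a, f x = d := fun x hx => by simpa [c_zero] using hd x hx
  have d_eq : d = ℓ := tendsto_nhds_unique
    (tendsto_const_nhds.congr' ((eventually_gt_atTop a).mono fun x hx => (const_eq x hx).symm)) hlim
  exact fun x hx => (const_eq x hx).trans d_eq

lemma integral_const_add_const_mul_sq_of_integral_eq_zero {f : ℝ → ℝ} {a b : ℝ}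
    (hf : IntervalIntegrable f volume a b) (hf2 : IntervalIntegrable (fun x => f x ^ 2) volume a b)
    (hmean : ∫ x in a..b, f x = 0) (c k : ℝ) :
    ∫ x in a..b, (c + k * f x) ^ 2 = (b - a) * c ^ 2 + k ^ 2 * ∫ x in a..b, f x ^ 2 := by
  calc ∫ x in a..b, (c + k * f x) ^ 2
      = ∫ x in a..b, (c ^ 2 + (2 * c * k * f x + k ^ 2 * f x ^ 2)) := by
        congr 1 with x; ring
    _ = (b - a) * c ^ 2 + (2 * c * k * (∫ x in a..b, f x) + k ^ 2 * ∫ x in a..b, f x ^ 2) := by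
        rw [intervalIntegral.integral_add intervalIntegrable_const
            ((hf.const_mul _).add (hf2.const_mul _)),
          intervalIntegral.integral_add (hf.const_mul _) (hf2.const_mul _),
          intervalIntegral.integral_const, smul_eq_mul,
          intervalIntegral.integral_const_mul, intervalIntegral.integral_const_mul]
    _ = (b - a) * c ^ 2 + k ^ 2 * ∫ x in a..b, f x ^ 2 := by rw [hmean, mul_zero, zero_add]

namespace Smooth2

variable {u : ℝ → ℝ → ℝ}

lemma continuous_uncurry (hu : Smooth2 u) : Continuous (Function.uncurry u) :=
  ContDiff.continuous hu

lemma fderiv_apply (hu : Smooth2 u) (p q : ℝ × ℝ) :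
    fderiv ℝ (Function.uncurry u) p q = Dθ u p.1 p.2 * q.1 + Dr u p.1 p.2 * q.2 := by
  have hp : HasFDerivAt (Function.uncurry u) (fderiv ℝ (Function.uncurry u) p) p :=
    (ContDiff.differentiable hu (by simp) p).hasFDerivAt
  have hθ : HasDerivAt (fun t => u t p.2) (fderiv ℝ (Function.uncurry u) p (1, 0)) p.1 := by
    have line : HasDerivAt (fun t : ℝ => (t, p.2)) ((1 : ℝ), (0 : ℝ)) p.1 :=
      (hasDerivAt_id _).prodMk (hasDerivAt_const _ _)
    exact hp.comp_hasDerivAt p.1 line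
  have hr : HasDerivAt (u p.1) (fderiv ℝ (Function.uncurry u) p (0, 1)) p.2 := by
    have line : HasDerivAt (fun t : ℝ => (p.1, t)) ((0 : ℝ), (1 : ℝ)) p.2 :=
      (hasDerivAt_const _ _).prodMk (hasDerivAt_id _)
    exact hp.comp_hasDerivAt p.2 line
  have hq : q = q.1 • ((1 : ℝ), (0 : ℝ)) + q.2 • ((0 : ℝ), (1 : ℝ)) := by ext <;> simp
  conv_lhs => rw [hq]
  rw [map_add, map_smul, map_smul, ← hθ.deriv, ← hr.deriv, smul_eq_mul, smul_eq_mul, mul_comm,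
    mul_comm (q.2), Dθ, Dr]

lemma hasDerivAt_comp (hu : Smooth2 u) {a b : ℝ → ℝ} {a' b' t : ℝ} (ha : HasDerivAt a a' t)
    (hb : HasDerivAt b b' t) :
    HasDerivAt (fun s => u (a s) (b s)) (Dθ u (a t) (b t) * a' + Dr u (a t) (b t) * b') t := by
  have hp := (ContDiff.differentiable hu (by simp) (a t, b t)).hasFDerivAt
  exact (hp.comp_hasDerivAt t (ha.prodMk hb)).congr_deriv (hu.fderiv_apply (a t, b t) (a', b'))

lemma hasDerivAt_Dθ (hu : Smooth2 u) (x z : ℝ) : HasDerivAt (fun t => u t z) (Dθ u x z) x := by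
  simpa using hu.hasDerivAt_comp (hasDerivAt_id x) (hasDerivAt_const x z)

lemma hasDerivAt_Dr (hu : Smooth2 u) (x z : ℝ) : HasDerivAt (u x) (Dr u x z) z := by
  simpa using hu.hasDerivAt_comp (hasDerivAt_const z x) (hasDerivAt_id z)

lemma smooth2_Dθ (hu : Smooth2 u) : Smooth2 (Dθ u) := by
  have : ContDiff ℝ (⊤ : ℕ∞) fun p => fderiv ℝ (Function.uncurry u) p (1, 0) :=
    (ContDiff.fderiv_right hu (by simp)).clm_apply contDiff_const
  simpa [Smooth2, hu.fderiv_apply] using this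

lemma smooth2_Dr (hu : Smooth2 u) : Smooth2 (Dr u) := by
  have : ContDiff ℝ (⊤ : ℕ∞) fun p => fderiv ℝ (Function.uncurry u) p (0, 1) :=
    (ContDiff.fderiv_right hu (by simp)).clm_apply contDiff_const
  simpa [Smooth2, hu.fderiv_apply] using this

end Smooth2

/-- The two Prandtl layers brought to a common form on the half plane `0 ≤ z`: `U` is the total
tangential velocity, `V` the normal velocity relative to the wall `z = 0`, `κ` the viscosity and
`e` the velocity at the outer edge of the layer. -/
structure IsPrandtlFlow (κ e : ℝ) (U V : ℝ → ℝ → ℝ) : Prop where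
  smooth_U : Smooth2 U
  smooth_V : Smooth2 V
  periodic : Periodic2 U
  momentum : ∀ x z, 0 ≤ z → U x z * Dθ U x z + V x z * Dr U x z = κ * Dr (Dr U) x z
  continuity : ∀ x z, 0 ≤ z → Dθ U x z + Dr V x z = 0
  wall : ∀ x, V x 0 = 0
  pos : ∀ x z, 0 ≤ z → 0 < U x z
  bounded : ∃ B, ∀ x z, 0 ≤ z → U x z ≤ B
  slip_pos : 0 < e
  tendsto_slip : ∀ x, Tendsto (U x) atTop (nhds e)

/-- The stream function `ψ(x, z) = ∫₀ᶻ U(x, s) ds`. -/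
def streamFunction (U : ℝ → ℝ → ℝ) (x z : ℝ) : ℝ := ∫ s in (0 : ℝ)..z, U x s

/-- The height `Z(x, s)` above the wall of the streamline `ψ = s`; its values for `s < 0` are
meaningless. The pair `(x, s)` is the von Mises coordinate of the point `(x, Z(x, s))`. -/
def streamlineHeight (U : ℝ → ℝ → ℝ) (x s : ℝ) : ℝ :=
  Function.invFunOn (streamFunction U x) (Ici 0) s

/-- The integral of `U²` over one period of the streamline `ψ = s`, with respect to the angle. -/
def streamlineEnergy (U : ℝ → ℝ → ℝ) (s : ℝ) : ℝ :=
  ∫ x in (0 : ℝ)..(2 * π), U x (streamlineHeight U x s) ^ 2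

lemma streamFunction_zero (U : ℝ → ℝ → ℝ) (x : ℝ) : streamFunction U x 0 = 0 :=
  intervalIntegral.integral_same

lemma hasDerivAt_streamFunction_snd {U : ℝ → ℝ → ℝ} {x : ℝ} (hU : Continuous (U x)) (z : ℝ) :
    HasDerivAt (streamFunction U x) (U x z) z :=
  intervalIntegral.integral_hasDerivAt_right (hU.intervalIntegrable _ _)
    (hU.stronglyMeasurableAtFilter _ _) hU.continuousAt

lemma streamlineHeight_add_two_pi {U : ℝ → ℝ → ℝ} (hU : Periodic2 U) (x s : ℝ) :
    streamlineHeight U (x + 2 * π) s = streamlineHeight U x s := by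
  have : streamFunction U (x + 2 * π) = streamFunction U x := by
    ext z; simp only [streamFunction, hU x]
  rw [streamlineHeight, this, streamlineHeight]

namespace IsPrandtlFlow

variable {κ e : ℝ} {U V : ℝ → ℝ → ℝ}

lemma continuous_section (h : IsPrandtlFlow κ e U V) (x : ℝ) : Continuous (U x) :=
  h.smooth_U.continuous_uncurry.comp (Continuous.prodMk_right x)

lemma hasDerivAt_streamFunction_fst (h : IsPrandtlFlow κ e U V) (x : ℝ) {z : ℝ} (hz : 0 ≤ z) :
    HasDerivAt (fun t => streamFunction U t z) (-V x z) x := by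
  have hUθ := h.smooth_U.smooth2_Dθ.continuous_uncurry
  have hderiv : HasDerivAt (fun t => streamFunction U t z) (∫ s in (0 : ℝ)..z, Dθ U x s) x :=
    hasDerivAt_intervalIntegral_of_continuousOn isOpen_univ (mem_univ x)
      (fun t _ => (h.continuous_section t).continuousOn) hUθ.continuousOn
      fun t _ s _ => h.smooth_U.hasDerivAt_Dθ t s
  have hV : ∀ s ∈ uIcc 0 z, HasDerivAt (fun r => -V x r) (Dθ U x s) s := fun s hs => by
    have hs0 : 0 ≤ s := (uIcc_of_le hz ▸ hs).1
    exact (h.smooth_V.hasDerivAt_Dr x s).neg.congr_deriv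
      (eq_neg_of_add_eq_zero_left (h.continuity x s hs0)).symm
  rwa [intervalIntegral.integral_eq_sub_of_hasDerivAt hV
    ((hUθ.comp (Continuous.prodMk_right x)).intervalIntegrable _ _), h.wall, neg_zero,
    sub_zero] at hderiv

lemma strictMonoOn_streamFunction (h : IsPrandtlFlow κ e U V) (x : ℝ) :
    StrictMonoOn (streamFunction U x) (Ici 0) := by
  have hψ := hasDerivAt_streamFunction_snd (h.continuous_section x)
  refine strictMonoOn_of_deriv_pos (convex_Ici 0)
    (fun z _ => (hψ z).continuousAt.continuousWithinAt) fun z hz => ?_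
  rw [(hψ z).deriv]
  exact h.pos x z (interior_subset hz)

lemma tendsto_streamFunction_atTop (h : IsPrandtlFlow κ e U V) (x : ℝ) :
    Tendsto (streamFunction U x) atTop atTop :=
  tendsto_atTop_of_tendsto_deriv_pos h.slip_pos
    (.of_forall (hasDerivAt_streamFunction_snd (h.continuous_section x))) (h.tendsto_slip x)

lemma bijOn_streamFunction (h : IsPrandtlFlow κ e U V) (x : ℝ) :
    BijOn (streamFunction U x) (Ici 0) (Ici 0) := by
  have hmono := h.strictMonoOn_streamFunction x
  refine ⟨fun z hz => ?_, hmono.injOn, ?_⟩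
  · rw [mem_Ici, ← streamFunction_zero U x]
    exact hmono.monotoneOn self_mem_Ici hz hz
  · have hcont : ContinuousOn (streamFunction U x) (Ici 0) := fun z _ =>
      (hasDerivAt_streamFunction_snd (h.continuous_section x) z).continuousAt.continuousWithinAt
    have := isPreconnected_Ici.intermediate_value_Ici self_mem_Ici
      (le_principal_iff.2 (Ici_mem_atTop 0)) hcont (h.tendsto_streamFunction_atTop x)
    rwa [streamFunction_zero] at this

lemma streamlineHeight_nonneg (h : IsPrandtlFlow κ e U V) (x : ℝ) {s : ℝ} (hs : 0 ≤ s) :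
    0 ≤ streamlineHeight U x s :=
  (h.bijOn_streamFunction x).surjOn.mapsTo_invFunOn hs

lemma streamFunction_streamlineHeight (h : IsPrandtlFlow κ e U V) (x : ℝ) {s : ℝ} (hs : 0 ≤ s) :
    streamFunction U x (streamlineHeight U x s) = s :=
  (h.bijOn_streamFunction x).invOn_invFunOn.2 hs

lemma streamlineHeight_streamFunction (h : IsPrandtlFlow κ e U V) (x : ℝ) {z : ℝ} (hz : 0 ≤ z) :
    streamlineHeight U x (streamFunction U x z) = z :=
  (h.bijOn_streamFunction x).invOn_invFunOn.1 hz

lemma le_streamlineHeight_iff (h : IsPrandtlFlow κ e U V) (x : ℝ) {s z : ℝ} (hs : 0 ≤ s)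
    (hz : 0 ≤ z) : z ≤ streamlineHeight U x s ↔ streamFunction U x z ≤ s := by
  rw [← (h.strictMonoOn_streamFunction x).le_iff_le hz (h.streamlineHeight_nonneg x hs),
    h.streamFunction_streamlineHeight x hs]

lemma streamlineHeight_pos (h : IsPrandtlFlow κ e U V) (x : ℝ) {s : ℝ} (hs : 0 < s) :
    0 < streamlineHeight U x s := by
  refine (h.streamlineHeight_nonneg x hs.le).lt_of_ne fun h0 => hs.ne ?_
  rw [← h.streamFunction_streamlineHeight x hs.le, ← h0, streamFunction_zero]

lemma velocity_streamlineHeight_pos (h : IsPrandtlFlow κ e U V) (x : ℝ) {s : ℝ} (hs : 0 < s) :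
    0 < U x (streamlineHeight U x s) :=
  h.pos x _ (h.streamlineHeight_pos x hs).le

lemma tendsto_streamlineHeight_atTop (h : IsPrandtlFlow κ e U V) (x : ℝ) :
    Tendsto (streamlineHeight U x) atTop atTop := by
  refine tendsto_atTop.2 fun b => ?_
  filter_upwards [eventually_ge_atTop 0, eventually_ge_atTop (streamFunction U x (max b 0))]
    with s hs hbs
  exact (le_max_left b 0).trans ((h.le_streamlineHeight_iff x hs (le_max_right b 0)).2 hbs)

lemma tendsto_streamlineHeight_zero (h : IsPrandtlFlow κ e U V) (x : ℝ) :
    Tendsto (streamlineHeight U x) (nhdsWithin 0 (Ioi 0)) (nhds 0) := by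
  rw [Metric.tendsto_nhds]
  intro ε hε
  have hψε : 0 < streamFunction U x ε := by
    rw [← streamFunction_zero U x]
    exact h.strictMonoOn_streamFunction x self_mem_Ici hε.le hε
  filter_upwards [Ioo_mem_nhdsGT hψε] with s hs
  rw [Real.dist_0_eq_abs, abs_of_pos (h.streamlineHeight_pos x hs.1), ← not_le,
    h.le_streamlineHeight_iff x hs.1.le hε.le, not_le]
  exact hs.2

lemma hasStrictFDerivAt_streamFunction (h : IsPrandtlFlow κ e U V) (x : ℝ) {z : ℝ} (hz : 0 < z) :
    HasStrictFDerivAt (Function.uncurry (streamFunction U))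
      ((ContinuousLinearMap.toSpanSingleton ℝ (-V x z)).coprod
        (ContinuousLinearMap.toSpanSingleton ℝ (U x z))) (x, z) := by
  have hspan := (ContinuousLinearMap.toSpanSingletonCLE (𝕜 := ℝ) (E := ℝ)).continuous
  have hψx : ∀ᶠ p : ℝ × ℝ in nhds (x, z), HasFDerivAt (fun t => streamFunction U t p.2)
      (ContinuousLinearMap.toSpanSingleton ℝ (-V p.1 p.2)) p.1 := by
    filter_upwards [continuousAt_snd.eventually (lt_mem_nhds hz)] with p hp
    exact (h.hasDerivAt_streamFunction_fst p.1 (le_of_lt hp)).hasFDerivAt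
  have hψz : ∀ᶠ p : ℝ × ℝ in nhds (x, z), HasFDerivAt (streamFunction U p.1)
      (ContinuousLinearMap.toSpanSingleton ℝ (U p.1 p.2)) p.2 :=
    .of_forall fun p => (hasDerivAt_streamFunction_snd (h.continuous_section p.1) p.2).hasFDerivAt
  exact hasStrictFDerivAt_uncurry_coprod (u := (x, z)) (f := streamFunction U)
    (f₁ := fun x z => ContinuousLinearMap.toSpanSingleton ℝ (-V x z))
    (f₂ := fun x z => ContinuousLinearMap.toSpanSingleton ℝ (U x z)) hψx hψz
    (hspan.comp h.smooth_V.continuous_uncurry.neg).continuousAt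
    (hspan.comp h.smooth_U.continuous_uncurry).continuousAt

lemma hasStrictFDerivAt_streamlineHeight (h : IsPrandtlFlow κ e U V) (x : ℝ) {s : ℝ}
    (hs : 0 < s) :
    HasStrictFDerivAt (Function.uncurry (streamlineHeight U))
      ((U x (streamlineHeight U x s))⁻¹ • (ContinuousLinearMap.snd ℝ ℝ ℝ
        + V x (streamlineHeight U x s) • ContinuousLinearMap.fst ℝ ℝ ℝ)) (x, s) := by
  set z := streamlineHeight U x s
  have hz : 0 < z := h.streamlineHeight_pos x hs
  -- the derivative of the von Mises map `(x, z) ↦ (x, ψ(x, z))`, with `∂ₓψ = -V` and `∂_zψ = U`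
  let Φ : (ℝ × ℝ) ≃L[ℝ] ℝ × ℝ := (ContinuousLinearEquiv.refl ℝ ℝ).skewProd
    (ContinuousLinearEquiv.unitsEquivAut ℝ (Units.mk0 (U x z) (h.pos x z hz.le).ne'))
    (ContinuousLinearMap.toSpanSingleton ℝ (-V x z))
  have hΦ : HasStrictFDerivAt (fun p : ℝ × ℝ => (p.1, streamFunction U p.1 p.2))
      (Φ : ℝ × ℝ →L[ℝ] ℝ × ℝ) (x, z) :=
    (hasStrictFDerivAt_fst.prodMk (h.hasStrictFDerivAt_streamFunction x hz)).congr_fderiv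
      (by ext <;> simp [Φ])
  have hleft : ∀ᶠ p : ℝ × ℝ in nhds (x, z),
      (p.1, streamlineHeight U p.1 (streamFunction U p.1 p.2)) = p := by
    filter_upwards [continuousAt_snd.eventually (lt_mem_nhds hz)] with p hp
    rw [h.streamlineHeight_streamFunction p.1 (le_of_lt hp)]
  have hinv := (hΦ.to_local_left_inverse
    (g := fun q => (q.1, streamlineHeight U q.1 q.2)) hleft).snd
  rw [h.streamFunction_streamlineHeight x hs.le] at hinv
  exact hinv.congr_fderiv (by ext <;> simp [Φ, mul_comm])

lemma hasDerivAt_streamlineHeight_fst (h : IsPrandtlFlow κ e U V) (x : ℝ) {s : ℝ} (hs : 0 < s) :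
    HasDerivAt (fun t => streamlineHeight U t s)
      ((U x (streamlineHeight U x s))⁻¹ * V x (streamlineHeight U x s)) x := by
  have line : HasDerivAt (fun t : ℝ => (t, s)) ((1 : ℝ), (0 : ℝ)) x :=
    (hasDerivAt_id _).prodMk (hasDerivAt_const _ _)
  have hZ := (h.hasStrictFDerivAt_streamlineHeight x hs).hasFDerivAt.comp_hasDerivAt x line
  exact hZ.congr_deriv (by simp)

lemma hasDerivAt_streamlineHeight_snd (h : IsPrandtlFlow κ e U V) (x : ℝ) {s : ℝ} (hs : 0 < s) :
    HasDerivAt (streamlineHeight U x) (U x (streamlineHeight U x s))⁻¹ s := by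
  have line : HasDerivAt (fun t : ℝ => (x, t)) ((0 : ℝ), (1 : ℝ)) s :=
    (hasDerivAt_const _ _).prodMk (hasDerivAt_id _)
  have hZ := (h.hasStrictFDerivAt_streamlineHeight x hs).hasFDerivAt.comp_hasDerivAt s line
  exact hZ.congr_deriv (by simp)

lemma continuousOn_comp_streamlineHeight (h : IsPrandtlFlow κ e U V) {w : ℝ → ℝ → ℝ}
    (hw : Continuous (Function.uncurry w)) (S : Set ℝ) :
    ContinuousOn (fun p : ℝ × ℝ => w p.2 (streamlineHeight U p.2 p.1)) (Ioi 0 ×ˢ S) := by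
  intro p hp
  have hZ : ContinuousAt (fun q : ℝ × ℝ => streamlineHeight U q.2 q.1) p :=
    (h.hasStrictFDerivAt_streamlineHeight p.2 hp.1).hasFDerivAt.continuousAt.comp
      (f := Prod.swap) (x := p) continuous_swap.continuousAt
  exact (hw.continuousAt.comp (continuousAt_snd.prodMk hZ)).continuousWithinAt

lemma continuous_comp_streamlineHeight (h : IsPrandtlFlow κ e U V) {w : ℝ → ℝ → ℝ}
    (hw : Continuous (Function.uncurry w)) {s : ℝ} (hs : 0 < s) :
    Continuous fun x => w x (streamlineHeight U x s) :=
  continuousOn_univ.1 <| (h.continuousOn_comp_streamlineHeight hw univ).comp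
    (Continuous.prodMk_right s).continuousOn fun _ _ => ⟨hs, mem_univ _⟩

lemma hasDerivAt_comp_streamlineHeight_snd (h : IsPrandtlFlow κ e U V) {w : ℝ → ℝ → ℝ}
    (hw : Smooth2 w) (x : ℝ) {s : ℝ} (hs : 0 < s) :
    HasDerivAt (fun t => w x (streamlineHeight U x t))
      (Dr w x (streamlineHeight U x s) * (U x (streamlineHeight U x s))⁻¹) s :=
  (hw.hasDerivAt_Dr x _).comp s (h.hasDerivAt_streamlineHeight_snd x hs)

lemma hasDerivAt_velocity_along_streamline (h : IsPrandtlFlow κ e U V) (x : ℝ) {s : ℝ}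
    (hs : 0 < s) :
    HasDerivAt (fun t => U t (streamlineHeight U t s))
      (κ * (Dr (Dr U) x (streamlineHeight U x s) * (U x (streamlineHeight U x s))⁻¹)) x := by
  refine (h.smooth_U.hasDerivAt_comp (hasDerivAt_id x)
    (h.hasDerivAt_streamlineHeight_fst x hs)).congr_deriv ?_
  have hU := (h.velocity_streamlineHeight_pos x hs).ne'
  rw [id_eq, ← mul_assoc κ, ← h.momentum x _ (h.streamlineHeight_pos x hs).le]
  field_simp

lemma integral_deriv_shear_eq_zero (h : IsPrandtlFlow κ e U V) (hκ : κ ≠ 0) {s : ℝ} (hs : 0 < s) :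
    ∫ x in (0 : ℝ)..(2 * π),
      Dr (Dr U) x (streamlineHeight U x s) * (U x (streamlineHeight U x s))⁻¹ = 0 := by
  have hcont : Continuous fun x =>
      Dr (Dr U) x (streamlineHeight U x s) * (U x (streamlineHeight U x s))⁻¹ :=
    (h.continuous_comp_streamlineHeight h.smooth_U.smooth2_Dr.smooth2_Dr.continuous_uncurry hs).mul
      ((h.continuous_comp_streamlineHeight h.smooth_U.continuous_uncurry hs).inv₀
        fun x => (h.velocity_streamlineHeight_pos x hs).ne')
  have hftc := intervalIntegral.integral_eq_sub_of_hasDerivAt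
    (fun x _ => h.hasDerivAt_velocity_along_streamline x hs)
    ((hcont.const_mul κ).intervalIntegrable 0 (2 * π))
  have hperiod : U (2 * π) (streamlineHeight U (2 * π) s) = U 0 (streamlineHeight U 0 s) := by
    rw [← zero_add (2 * π), streamlineHeight_add_two_pi h.periodic, h.periodic]
  rw [hperiod, sub_self, intervalIntegral.integral_const_mul] at hftc
  exact (mul_eq_zero.1 hftc).resolve_left hκ

lemma hasDerivAt_streamlineEnergy (h : IsPrandtlFlow κ e U V) {s : ℝ} (hs : 0 < s) :
    HasDerivAt (streamlineEnergy U)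
      (∫ x in (0 : ℝ)..(2 * π), 2 * Dr U x (streamlineHeight U x s)) s := by
  have hUr := h.smooth_U.smooth2_Dr.continuous_uncurry
  refine hasDerivAt_intervalIntegral_of_continuousOn isOpen_Ioi hs (fun t ht => ?_)
    (F' := fun t x => 2 * Dr U x (streamlineHeight U x t))
    (continuousOn_const.mul (h.continuousOn_comp_streamlineHeight hUr _)) fun t ht x _ => ?_
  · exact ((h.continuous_comp_streamlineHeight h.smooth_U.continuous_uncurry ht).pow 2).continuousOn
  · refine ((h.hasDerivAt_comp_streamlineHeight_snd h.smooth_U x ht).pow 2).congr_deriv ?_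
    have hU := (h.velocity_streamlineHeight_pos x ht).ne'
    simp only [Nat.cast_ofNat, Nat.add_one_sub_one, pow_one]
    field_simp

lemma hasDerivAt_deriv_streamlineEnergy (h : IsPrandtlFlow κ e U V) (hκ : κ ≠ 0) {s : ℝ}
    (hs : 0 < s) :
    HasDerivAt (fun t => ∫ x in (0 : ℝ)..(2 * π), 2 * Dr U x (streamlineHeight U x t)) 0 s := by
  have hUr := h.smooth_U.smooth2_Dr
  have hUc := h.smooth_U.continuous_uncurry
  have hUrc := hUr.continuous_uncurry
  have hderiv : HasDerivAt (fun t => ∫ x in (0 : ℝ)..(2 * π), 2 * Dr U x (streamlineHeight U x t))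
      (∫ x in (0 : ℝ)..(2 * π),
        2 * (Dr (Dr U) x (streamlineHeight U x s) * (U x (streamlineHeight U x s))⁻¹)) s := by
    refine hasDerivAt_intervalIntegral_of_continuousOn isOpen_Ioi hs (fun t ht => ?_)
      (F' := fun t x => 2 * (Dr (Dr U) x (streamlineHeight U x t) *
        (U x (streamlineHeight U x t))⁻¹)) (continuousOn_const.mul ?_)
      fun t ht x _ => (h.hasDerivAt_comp_streamlineHeight_snd hUr x ht).const_mul 2
    · exact ((h.continuous_comp_streamlineHeight hUrc ht).const_mul 2).continuousOn
    · exact (h.continuousOn_comp_streamlineHeight hUr.smooth2_Dr.continuous_uncurry _).mul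
        ((h.continuousOn_comp_streamlineHeight hUc _).inv₀
          fun p hp => (h.velocity_streamlineHeight_pos p.2 hp.1).ne')
  rwa [intervalIntegral.integral_const_mul, h.integral_deriv_shear_eq_zero hκ hs, mul_zero]
    at hderiv

lemma tendsto_streamlineEnergy (h : IsPrandtlFlow κ e U V) {l : Filter ℝ} [l.IsCountablyGenerated]
    (hl : ∀ᶠ s in l, 0 < s) {g : ℝ → ℝ}
    (hg : ∀ x, Tendsto (fun s => U x (streamlineHeight U x s)) l (nhds (g x))) :
    Tendsto (streamlineEnergy U) l (nhds (∫ x in (0 : ℝ)..(2 * π), g x ^ 2)) := by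
  obtain ⟨B, hB⟩ := h.bounded
  refine intervalIntegral.tendsto_integral_filter_of_dominated_convergence (fun _ => B ^ 2)
    (hl.mono fun s hs => ?_) (hl.mono fun s hs => .of_forall fun x _ => ?_)
    intervalIntegrable_const (.of_forall fun x _ => (hg x).pow 2)
  · exact ((h.continuous_comp_streamlineHeight h.smooth_U.continuous_uncurry hs).pow
      2).aestronglyMeasurable
  · rw [norm_pow, Real.norm_of_nonneg (h.velocity_streamlineHeight_pos x hs).le]
    exact pow_le_pow_left₀ (h.velocity_streamlineHeight_pos x hs).le
      (hB x _ (h.streamlineHeight_pos x hs).le) 2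

lemma streamlineEnergy_eq (h : IsPrandtlFlow κ e U V) (hκ : κ ≠ 0) :
    ∀ s ∈ Ioi 0, streamlineEnergy U s = 2 * π * e ^ 2 := by
  refine eq_limit_of_second_deriv_eq_zero (fun s hs => h.hasDerivAt_streamlineEnergy hs)
    (fun s hs => h.hasDerivAt_deriv_streamlineEnergy hκ hs) ?_
  simpa using h.tendsto_streamlineEnergy (eventually_gt_atTop 0)
    fun x => (h.tendsto_slip x).comp (h.tendsto_streamlineHeight_atTop x)

theorem integral_wall_velocity_sq (h : IsPrandtlFlow κ e U V) (hκ : κ ≠ 0) :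
    ∫ x in (0 : ℝ)..(2 * π), U x 0 ^ 2 = 2 * π * e ^ 2 := by
  have hwall : Tendsto (streamlineEnergy U) (nhdsWithin 0 (Ioi 0))
      (nhds (∫ x in (0 : ℝ)..(2 * π), U x 0 ^ 2)) :=
    h.tendsto_streamlineEnergy self_mem_nhdsWithin fun x =>
      (h.continuous_section x).continuousAt.tendsto.comp (h.tendsto_streamlineHeight_zero x)
  exact tendsto_nhds_unique hwall <| tendsto_const_nhds.congr' <|
    eventually_nhdsWithin_of_forall fun s hs => (h.streamlineEnergy_eq hκ s hs).symm

theorem slip_sq_eq (h : IsPrandtlFlow κ e U V) (hκ : κ ≠ 0) {a η : ℝ} {f : ℝ → ℝ}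
    (hf : Continuous f) (hmean : ∫ x in (0 : ℝ)..(2 * π), f x = 0)
    (hwall : ∀ x, U x 0 = a + η * f x) :
    e ^ 2 = a ^ 2 + η ^ 2 / (2 * π) * ∫ x in (0 : ℝ)..(2 * π), f x ^ 2 := by
  have hmass := h.integral_wall_velocity_sq hκ
  simp only [hwall] at hmass
  rw [integral_const_add_const_mul_sq_of_integral_eq_zero (hf.intervalIntegrable _ _)
    ((hf.pow 2).intervalIntegrable _ _) hmean, sub_zero] at hmass
  have hπ := Real.pi_ne_zero
  field_simp
  linarith

end IsPrandtlFlow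

lemma PrandtlOuter.isPrandtlFlow {e α η B : ℝ} {f : ℝ → ℝ} {u v : ℝ → ℝ → ℝ}
    (h : PrandtlOuter e α η f u v) (he : 0 < e) (hpos : ∀ x y, y ≤ 0 → 0 < e + u x y)
    (hB : ∀ x y, y ≤ 0 → u x y ≤ B) :
    IsPrandtlFlow 1 e (fun x z => e + u x (-z)) (fun x z => v x 0 - v x (-z)) := by
  obtain ⟨hu, hv, hper, -, hmom, hcont, -, hlim, -⟩ := h
  have hUθ (x z : ℝ) : Dθ (fun x z => e + u x (-z)) x z = Dθ u x (-z) := deriv_const_add ..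
  have hUr : Dr (fun x z => e + u x (-z)) = fun x z => -Dr u x (-z) := by
    ext x z; exact (deriv_const_add ..).trans (deriv_comp_neg ..)
  have hUrr (x z : ℝ) : Dr (fun x z => -Dr u x (-z)) x z = Dr (Dr u) x (-z) :=
    (deriv.fun_neg ..).trans (neg_eq_iff_eq_neg.2 (deriv_comp_neg ..))
  have hVr (x z : ℝ) : Dr (fun x z => v x 0 - v x (-z)) x z = Dr v x (-z) :=
    (deriv_const_sub ..).trans (neg_eq_iff_eq_neg.2 (deriv_comp_neg ..))
  have reflect : ContDiff ℝ (⊤ : ℕ∞) fun p : ℝ × ℝ => (p.1, -p.2) :=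
    contDiff_fst.prodMk contDiff_snd.neg
  have onto_wall : ContDiff ℝ (⊤ : ℕ∞) fun p : ℝ × ℝ => (p.1, (0 : ℝ)) :=
    contDiff_fst.prodMk contDiff_const
  exact
    { smooth_U := contDiff_const.add (ContDiff.comp hu reflect)
      smooth_V := (ContDiff.comp hv onto_wall).sub (ContDiff.comp hv reflect)
      periodic := fun x z => congrArg (e + ·) (hper x (-z))
      momentum := fun x z hz => by
        rw [hUθ, hUr, hUrr]
        linarith [hmom x (-z) (neg_nonpos.2 hz)]
      continuity := fun x z hz => by rw [hUθ, hVr, hcont x (-z) (neg_nonpos.2 hz)]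
      wall := fun x => by simp only [neg_zero, sub_self]
      pos := fun x z hz => hpos x (-z) (neg_nonpos.2 hz)
      bounded := ⟨e + B, fun x z hz => by linarith [hB x (-z) (neg_nonpos.2 hz)]⟩
      slip_pos := he
      tendsto_slip := fun x => by
        simpa using ((hlim x).comp tendsto_neg_atTop_atBot).const_add e }

lemma PrandtlInner.isPrandtlFlow {e β η r₀ B : ℝ} {g : ℝ → ℝ} {u v : ℝ → ℝ → ℝ}
    (h : PrandtlInner e β η r₀ g u v) (he : 0 < e) (hpos : ∀ x z, 0 ≤ z → 0 < e + u x z)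
    (hB : ∀ x z, 0 ≤ z → u x z ≤ B) :
    IsPrandtlFlow r₀ e (fun x z => e + u x z) (fun x z => r₀ * (v x z - v x 0)) := by
  obtain ⟨hu, hv, hper, -, hmom, hcont, -, hlim, -⟩ := h
  have hUθ (x z : ℝ) : Dθ (fun x z => e + u x z) x z = Dθ u x z := deriv_const_add ..
  have hUr : Dr (fun x z => e + u x z) = Dr u := by ext x z; exact deriv_const_add ..
  have hVr (x z : ℝ) : Dr (fun x z => r₀ * (v x z - v x 0)) x z = r₀ * Dr v x z :=
    (deriv_const_mul_field ..).trans (congrArg (r₀ * ·) (deriv_sub_const ..))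
  have onto_wall : ContDiff ℝ (⊤ : ℕ∞) fun p : ℝ × ℝ => (p.1, (0 : ℝ)) :=
    contDiff_fst.prodMk contDiff_const
  exact
    { smooth_U := contDiff_const.add hu
      smooth_V := contDiff_const.mul (ContDiff.sub hv (ContDiff.comp hv onto_wall))
      periodic := fun x z => congrArg (e + ·) (hper x z)
      momentum := fun x z hz => by
        rw [hUθ, hUr]
        linarith [hmom x z hz]
      continuity := fun x z hz => by rw [hUθ, hVr, hcont x z hz]
      wall := fun x => by simp only [sub_self, mul_zero]
      pos := hpos
      bounded := ⟨e + B, fun x z hz => by linarith [hB x z hz]⟩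
      slip_pos := he
      tendsto_slip := fun x => by simpa using (hlim x).const_add e }

theorem PrandtlOuter.slip_sq_eq {e α η B : ℝ} {f : ℝ → ℝ} {u v : ℝ → ℝ → ℝ}
    (h : PrandtlOuter e α η f u v) (he : 0 < e) (hpos : ∀ x y, y ≤ 0 → 0 < e + u x y)
    (hB : ∀ x y, y ≤ 0 → u x y ≤ B) (hf : Continuous f)
    (hmean : ∫ x in (0 : ℝ)..(2 * π), f x = 0) :
    e ^ 2 = α ^ 2 + η ^ 2 / (2 * π) * ∫ x in (0 : ℝ)..(2 * π), f x ^ 2 := by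
  have hwall : ∀ x, u x 0 = α + η * f x - e := h.2.2.2.2.2.2.1
  refine (h.isPrandtlFlow he hpos hB).slip_sq_eq one_ne_zero hf hmean fun x => ?_
  rw [neg_zero, hwall, add_sub_cancel]

theorem PrandtlInner.slip_sq_eq {e β η r₀ B : ℝ} {g : ℝ → ℝ} {u v : ℝ → ℝ → ℝ}
    (h : PrandtlInner e β η r₀ g u v) (hr₀ : r₀ ≠ 0) (he : 0 < e)
    (hpos : ∀ x z, 0 ≤ z → 0 < e + u x z) (hB : ∀ x z, 0 ≤ z → u x z ≤ B) (hg : Continuous g)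
    (hmean : ∫ x in (0 : ℝ)..(2 * π), g x = 0) :
    e ^ 2 = β ^ 2 + η ^ 2 / (2 * π) * ∫ x in (0 : ℝ)..(2 * π), g x ^ 2 := by
  have hwall : ∀ x, u x 0 = β + η * g x - e := h.2.2.2.2.2.2.1
  refine (h.isPrandtlFlow he hpos hB).slip_sq_eq hr₀ hg hmean fun x => ?_
  rw [hwall, add_sub_cancel]

/-- **Batchelor–Wood formula.**  If the steady Prandtl systems near `r = 1` and `r = r₀`
admit solutions with positive total tangential velocity, bounded uniformly by `M`, and the
boundary data `f, g` have zero mean, then the slip velocities of the limiting Euler flow are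
determined: `u_e(1)² = α² + (η²/2π)∫f²` and `u_e(r₀)² = β² + (η²/2π)∫g²`. -/
theorem batchelor_wood_formula
    (r0 α β η : ℝ) (hr0 : 0 < r0) (hr01 : r0 < 1) (hα : 0 < α) (hβ : 0 < β)
    (f g : ℝ → ℝ) (hf : ContDiff ℝ (⊤ : ℕ∞) f) (hg : ContDiff ℝ (⊤ : ℕ∞) g)
    (hfper : ∀ θ, f (θ + 2 * π) = f θ) (hgper : ∀ θ, g (θ + 2 * π) = g θ)
    (hfmean : (∫ θ in (0:ℝ)..(2 * π), f θ) = 0)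
    (hgmean : (∫ θ in (0:ℝ)..(2 * π), g θ) = 0)
    (ue : ℝ → ℝ) (hue : ContDiff ℝ (⊤ : ℕ∞) ue) (huepos : ∀ r ∈ Icc r0 1, 0 < ue r)
    (up vp : ℝ → ℝ → ℝ) (hP1 : PrandtlOuter (ue 1) α η f up vp)
    (uq vq : ℝ → ℝ → ℝ) (hP2 : PrandtlInner (ue r0) β η r0 g uq vq)
    (hpos1 : ∀ θ Y : ℝ, Y ≤ 0 → 0 < ue 1 + up θ Y)
    (hpos2 : ∀ θ Z : ℝ, 0 ≤ Z → 0 < ue r0 + uq θ Z)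
    (M : ℝ) (hM : 0 < M)
    (hbdd : ∀ θ θ' Y Z : ℝ, Y ≤ 0 → 0 ≤ Z → |up θ Y| + |uq θ' Z| ≤ M) :
    (ue 1) ^ 2 = α ^ 2 + η ^ 2 / (2 * π) * ∫ θ in (0:ℝ)..(2 * π), (f θ) ^ 2 ∧
    (ue r0) ^ 2 = β ^ 2 + η ^ 2 / (2 * π) * ∫ θ in (0:ℝ)..(2 * π), (g θ) ^ 2  := by
  have he₁ : 0 < ue 1 := huepos 1 ⟨hr01.le, le_rfl⟩
  have he₀ : 0 < ue r0 := huepos r0 ⟨le_rfl, hr01.le⟩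
  have hup (θ Y : ℝ) (hY : Y ≤ 0) : up θ Y ≤ M :=
    (le_abs_self _).trans <| (le_add_of_nonneg_right (abs_nonneg _)).trans (hbdd θ 0 Y 0 hY le_rfl)
  have huq (θ Z : ℝ) (hZ : 0 ≤ Z) : uq θ Z ≤ M :=
    (le_abs_self _).trans <| (le_add_of_nonneg_left (abs_nonneg _)).trans (hbdd 0 θ 0 Z le_rfl hZ)
  exact ⟨hP1.slip_sq_eq he₁ hpos1 hup hf.continuous hfmean,
    hP2.slip_sq_eq hr0.ne' he₀ hpos2 huq hg.continuous hgmean⟩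
end
end

section
/- If (ū_e^{(1)},v̄_e^{(1)}) solves the first-order linearized Euler system u_e(r)∂_θū_e^{(1)}+r v̄_e^{(1)}u_e'(r)+u_e(r)v̄_e^{(1)}+∂_θp̄_e^{(1)}=0, u_e(r)∂_θv̄_e^{(1)}−2u_e(r)ū_e^{(1)}+r∂_rp̄_e^{(1)}=0, ∂_θū_e^{(1)}+r∂_rv̄_e^{(1)}+v̄_e^{(1)}=0 on [0,2π]×[r_0,1] with ∫₀^{2π}v̄_e^{(1)}(θ,r)dθ=0 for all r, then ∫₀^{2π}[ū_e^{(1)}∂_θū_e^{(1)}+v̄_e^{(1)}r∂_rū_e^{(1)}+ū_e^{(1)}v̄_e^{(1)}](θ,r)dθ=0 for every r∈[r_0,1]. (This is the necessary solvability condition for the second-order linearized Euler system.) -/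
/-!
Write `w = r ∂_r u + u - ∂_θ v` for `r` times the vorticity of the perturbation. Eliminating the
pressure from the two momentum equations gives, by the divergence-free relation,
`u_e ∂_θ w = -(r² u_e'' + r u_e' - u_e) v`, so on each circle `∂_θ w` is a constant multiple of `v`.
The integrand of the solvability condition is `u ∂_θ u + w v + v ∂_θ v`. The first and last terms
are exact `θ`-derivatives. For the middle one, integrate by parts against `V = ∫ v`, which vanishes
at both ends because `v` has mean zero: what is left is a multiple of `∫ V ∂_θ V = 0`.
-/

open Real MeasureTheory Filter Set

noncomputable section

/-- The first-order linearized Euler system around the rotating shear flow `(u_e(r), 0)`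
on the annulus `[0,2π] × [r₀,1]`. -/
def LinEuler1 (r0 : ℝ) (ue : ℝ → ℝ) (u v p : ℝ → ℝ → ℝ) : Prop :=
  (∀ θ r, r ∈ Icc r0 1 →
    ue r * Dθ u θ r + r * v θ r * deriv ue r + ue r * v θ r + Dθ p θ r = 0) ∧
  (∀ θ r, r ∈ Icc r0 1 →
    ue r * Dθ v θ r - 2 * ue r * u θ r + r * Dr p θ r = 0) ∧
  (∀ θ r, r ∈ Icc r0 1 → Dθ u θ r + r * Dr v θ r + v θ r = 0)

section Integration

variable {a b : ℝ}

theorem integral_mul_deriv_self_eq_zero {f f' : ℝ → ℝ}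
    (hf : ∀ x ∈ uIcc a b, HasDerivAt f (f' x) x) (hf' : ContinuousOn f' (uIcc a b))
    (hab : f a = f b) : ∫ x in a..b, f x * f' x = 0 := by
  simpa [hab] using intervalIntegral.integral_comp_mul_deriv hf hf' continuous_id

theorem integral_mul_eq_zero_of_hasDerivAt_const_mul {v w : ℝ → ℝ} {c : ℝ} (hv : Continuous v)
    (hv0 : ∫ x in a..b, v x = 0) (hw : ∀ x ∈ uIcc a b, HasDerivAt w (c * v x) x) :
    ∫ x in a..b, w x * v x = 0 := by
  let V : ℝ → ℝ := fun x => ∫ t in a..x, v t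
  have hV : ∀ x, HasDerivAt V (v x) x := fun x => (hv.integral_hasStrictDerivAt a x).hasDerivAt
  have hVa : V a = 0 := intervalIntegral.integral_same
  have hVb : V b = 0 := hv0
  calc ∫ x in a..b, w x * v x
      = w b * V b - w a * V a - ∫ x in a..b, c * v x * V x :=
        intervalIntegral.integral_mul_deriv_eq_deriv_mul hw (fun x _ => hV x)
          ((hv.const_mul c).intervalIntegrable a b) (hv.intervalIntegrable a b)
    _ = -(c * ∫ x in a..b, V x * v x) := by
        simp only [hVa, hVb, mul_zero, sub_zero, zero_sub, mul_assoc, mul_comm (v _),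
          intervalIntegral.integral_const_mul]
    _ = 0 := by
        rw [integral_mul_deriv_self_eq_zero (fun x _ => hV x) hv.continuousOn (hVa.trans hVb.symm),
          mul_zero, neg_zero]

end Integration

section PartialDerivatives

open Function

variable {f : ℝ → ℝ → ℝ} {x y : ℝ}

theorem hasDerivAt_Dθ (hf : DifferentiableAt ℝ (uncurry f) (x, y)) :
    HasDerivAt (fun t => f t y) (Dθ f x y) x :=
  (hf.comp x (f := fun t => (t, y)) (by fun_prop)).hasDerivAt

theorem hasDerivAt_Dr (hf : DifferentiableAt ℝ (uncurry f) (x, y)) :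
    HasDerivAt (fun s => f x s) (Dr f x y) y :=
  (hf.comp y (f := fun s => (x, s)) (by fun_prop)).hasDerivAt

theorem Dθ_eq_fderiv (hf : DifferentiableAt ℝ (uncurry f) (x, y)) :
    Dθ f x y = fderiv ℝ (uncurry f) (x, y) (1, 0) :=
  (hf.hasFDerivAt.comp_hasDerivAt (f := fun t => (t, y)) x
    ((hasDerivAt_id x).prodMk (hasDerivAt_const x y))).deriv

theorem Dr_eq_fderiv (hf : DifferentiableAt ℝ (uncurry f) (x, y)) :
    Dr f x y = fderiv ℝ (uncurry f) (x, y) (0, 1) :=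
  (hf.hasFDerivAt.comp_hasDerivAt (f := fun s => (x, s)) y
    ((hasDerivAt_const y x).prodMk (hasDerivAt_id y))).deriv

theorem uncurry_Dθ (hf : Differentiable ℝ (uncurry f)) :
    uncurry (Dθ f) = fun q => fderiv ℝ (uncurry f) q (1, 0) :=
  funext fun q => Dθ_eq_fderiv (hf q)

theorem uncurry_Dr (hf : Differentiable ℝ (uncurry f)) :
    uncurry (Dr f) = fun q => fderiv ℝ (uncurry f) q (0, 1) :=
  funext fun q => Dr_eq_fderiv (hf q)

theorem contDiff_Dθ {n : WithTop ℕ∞} (hf : ContDiff ℝ (n + 1) (uncurry f)) :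
    ContDiff ℝ n (uncurry (Dθ f)) := by
  rw [uncurry_Dθ (hf.differentiable (by simp))]
  exact (hf.fderiv_right le_rfl).clm_apply contDiff_const

theorem contDiff_Dr {n : WithTop ℕ∞} (hf : ContDiff ℝ (n + 1) (uncurry f)) :
    ContDiff ℝ n (uncurry (Dr f)) := by
  rw [uncurry_Dr (hf.differentiable (by simp))]
  exact (hf.fderiv_right le_rfl).clm_apply contDiff_const

theorem differentiable_Dθ (hf : ContDiff ℝ 2 (uncurry f)) : Differentiable ℝ (uncurry (Dθ f)) :=
  (contDiff_Dθ (n := 1) hf).differentiable one_ne_zero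

theorem differentiable_Dr (hf : ContDiff ℝ 2 (uncurry f)) : Differentiable ℝ (uncurry (Dr f)) :=
  (contDiff_Dr (n := 1) hf).differentiable one_ne_zero

theorem Dr_Dθ_comm (hf : ContDiff ℝ 2 (uncurry f)) : Dr (Dθ f) x y = Dθ (Dr f) x y := by
  have hf₁ : Differentiable ℝ (uncurry f) := hf.differentiable two_ne_zero
  have hf₂ : DifferentiableAt ℝ (fderiv ℝ (uncurry f)) (x, y) :=
    (hf.fderiv_right (m := 1) le_rfl).differentiable (by simp) _
  have hsymm : IsSymmSndFDerivAt ℝ (uncurry f) (x, y) :=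
    hf.contDiffAt.isSymmSndFDerivAt (by simp)
  rw [Dr_eq_fderiv (differentiable_Dθ hf _), Dθ_eq_fderiv (differentiable_Dr hf _),
    uncurry_Dθ hf₁, uncurry_Dr hf₁]
  simpa [fderiv_clm_apply hf₂ (differentiableAt_const _)] using hsymm (0, 1) (1, 0)

end PartialDerivatives

section Vorticity

open Function

/-- `r` times the vorticity `(∂_r (r u) - ∂_θ v) / r` of the velocity field with angular component
`u` and radial component `v`. The factor `r` keeps the expression free of division. -/
def scaledVorticity (u v : ℝ → ℝ → ℝ) : ℝ → ℝ → ℝ :=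
  fun θ r => r * Dr u θ r + u θ r - Dθ v θ r

variable {u v p : ℝ → ℝ → ℝ} {ue : ℝ → ℝ} {r0 r : ℝ}

theorem hasDerivAt_scaledVorticity (hu : ContDiff ℝ 2 (uncurry u)) (hv : ContDiff ℝ 2 (uncurry v))
    (θ r : ℝ) :
    HasDerivAt (fun t => scaledVorticity u v t r)
      (r * Dθ (Dr u) θ r + Dθ u θ r - Dθ (Dθ v) θ r) θ :=
  (((hasDerivAt_Dθ (differentiable_Dr hu _)).const_mul r).add
    (hasDerivAt_Dθ (hu.differentiable two_ne_zero _))).sub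
    (hasDerivAt_Dθ (differentiable_Dθ hv _))

theorem LinEuler1.Dr_angular_momentum (h : LinEuler1 r0 ue u v p) (hr01 : r0 < 1)
    (hr : r ∈ Icc r0 1) (hue : ContDiff ℝ 2 ue) (hu : ContDiff ℝ 2 (uncurry u))
    (hv : Differentiable ℝ (uncurry v)) (hp : ContDiff ℝ 2 (uncurry p)) (θ : ℝ) :
    deriv ue r * Dθ u θ r + ue r * Dr (Dθ u) θ r
      + ((v θ r + r * Dr v θ r) * deriv ue r + r * v θ r * deriv (deriv ue) r)
      + (deriv ue r * v θ r + ue r * Dr v θ r) + Dr (Dθ p) θ r = 0 := by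
  have hue₁ : HasDerivAt ue (deriv ue r) r := (hue.differentiable two_ne_zero r).hasDerivAt
  have hue₂ : HasDerivAt (deriv ue) (deriv (deriv ue) r) r :=
    ((hue.deriv' (n := 1)).differentiable (by simp) r).hasDerivAt
  have hv₁ := hasDerivAt_Dr (hv (θ, r))
  have hu₂ := hasDerivAt_Dr (differentiable_Dθ hu (θ, r))
  have hp₂ := hasDerivAt_Dr (differentiable_Dθ hp (θ, r))
  have hderiv := (((hue₁.mul hu₂).add (((hasDerivAt_id r).mul hv₁).mul hue₂)).add
    (hue₁.mul hv₁)).add hp₂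
  have hzero := (hasDerivWithinAt_const r (Icc r0 1) (0 : ℝ)).congr (h.1 θ) (h.1 θ r hr)
  simpa using (uniqueDiffOn_Icc hr01 r hr).eq_deriv _ hderiv.hasDerivWithinAt hzero

theorem LinEuler1.Dθ_radial_momentum (h : LinEuler1 r0 ue u v p) (hr : r ∈ Icc r0 1)
    (hu : Differentiable ℝ (uncurry u)) (hv : ContDiff ℝ 2 (uncurry v))
    (hp : ContDiff ℝ 2 (uncurry p)) (θ : ℝ) :
    ue r * Dθ (Dθ v) θ r - 2 * ue r * Dθ u θ r + r * Dθ (Dr p) θ r = 0 := by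
  have hv₂ := hasDerivAt_Dθ (differentiable_Dθ hv (θ, r))
  have hp₂ := hasDerivAt_Dθ (differentiable_Dr hp (θ, r))
  have hderiv := ((hv₂.const_mul (ue r)).sub
    ((hasDerivAt_Dθ (hu (θ, r))).const_mul (2 * ue r))).add (hp₂.const_mul r)
  exact hderiv.unique ((hasDerivAt_const θ 0).congr_of_eventuallyEq (.of_forall (h.2.1 · r hr)))

theorem LinEuler1.vorticity_equation (h : LinEuler1 r0 ue u v p) (hr01 : r0 < 1)
    (hr : r ∈ Icc r0 1) (hue : ContDiff ℝ 2 ue) (hu : ContDiff ℝ 2 (uncurry u))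
    (hv : ContDiff ℝ 2 (uncurry v)) (hp : ContDiff ℝ 2 (uncurry p)) (θ : ℝ) :
    ue r * Dθ (scaledVorticity u v) θ r
      = -(r ^ 2 * deriv (deriv ue) r + r * deriv ue r - ue r) * v θ r := by
  have angular := h.Dr_angular_momentum hr01 hr hue hu (hv.differentiable two_ne_zero) hp θ
  have radial := h.Dθ_radial_momentum hr (hu.differentiable two_ne_zero) hv hp θ
  have divergence := h.2.2 θ r hr
  rw [Dr_Dθ_comm hu, Dr_Dθ_comm hp] at angular
  rw [Dθ, (hasDerivAt_scaledVorticity hu hv θ r).deriv]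
  linear_combination r * angular - radial - (r * deriv ue r + ue r) * divergence

theorem LinEuler1.integral_scaledVorticity_mul_eq_zero (h : LinEuler1 r0 ue u v p) (hr01 : r0 < 1)
    (hr : r ∈ Icc r0 1) (hue : ContDiff ℝ 2 ue) (hue_ne : ue r ≠ 0)
    (hu : ContDiff ℝ 2 (uncurry u)) (hv : ContDiff ℝ 2 (uncurry v))
    (hp : ContDiff ℝ 2 (uncurry p)) {a b : ℝ} (hv0 : ∫ θ in a..b, v θ r = 0) :
    ∫ θ in a..b, scaledVorticity u v θ r * v θ r = 0 := by
  refine integral_mul_eq_zero_of_hasDerivAt_const_mul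
    (c := -(r ^ 2 * deriv (deriv ue) r + r * deriv ue r - ue r) / ue r)
    (hv.continuous.uncurry_right r) hv0 fun θ _ => ?_
  have hderiv : Dθ (scaledVorticity u v) θ r
      = -(r ^ 2 * deriv (deriv ue) r + r * deriv ue r - ue r) / ue r * v θ r := by
    rw [div_mul_eq_mul_div, eq_div_iff hue_ne, mul_comm]
    exact h.vorticity_equation hr01 hr hue hu hv hp θ
  exact hderiv ▸ (hasDerivAt_scaledVorticity hu hv θ r).differentiableAt.hasDerivAt

theorem second_order_euler_solvability_condition_general (h : LinEuler1 r0 ue u v p)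
    (hr01 : r0 < 1) (hr : r ∈ Icc r0 1) (hue : ContDiff ℝ 2 ue) (hue_ne : ue r ≠ 0)
    (hu : ContDiff ℝ 2 (uncurry u)) (hv : ContDiff ℝ 2 (uncurry v))
    (hp : ContDiff ℝ 2 (uncurry p)) {a b : ℝ} (hu_ends : u a r = u b r)
    (hv_ends : v a r = v b r) (hv0 : ∫ θ in a..b, v θ r = 0) :
    ∫ θ in a..b, (u θ r * Dθ u θ r + v θ r * (r * Dr u θ r) + u θ r * v θ r) = 0 := by
  have hDu_circle : Continuous (Dθ u · r) := (differentiable_Dθ hu).continuous.uncurry_right r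
  have hDv_circle : Continuous (Dθ v · r) := (differentiable_Dθ hv).continuous.uncurry_right r
  have hw_circle : Continuous (scaledVorticity u v · r) := continuous_iff_continuousAt.2 fun θ =>
    (hasDerivAt_scaledVorticity hu hv θ r).continuousAt
  have hu_circle : Continuous (u · r) := hu.continuous.uncurry_right r
  have hv_circle : Continuous (v · r) := hv.continuous.uncurry_right r
  have hu_exact : ∫ θ in a..b, u θ r * Dθ u θ r = 0 :=
    integral_mul_deriv_self_eq_zero (fun θ _ => hasDerivAt_Dθ (hu.differentiable two_ne_zero _))
      hDu_circle.continuousOn hu_ends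
  have hv_exact : ∫ θ in a..b, v θ r * Dθ v θ r = 0 :=
    integral_mul_deriv_self_eq_zero (fun θ _ => hasDerivAt_Dθ (hv.differentiable two_ne_zero _))
      hDv_circle.continuousOn hv_ends
  calc ∫ θ in a..b, (u θ r * Dθ u θ r + v θ r * (r * Dr u θ r) + u θ r * v θ r)
      = ∫ θ in a..b, (u θ r * Dθ u θ r + scaledVorticity u v θ r * v θ r + v θ r * Dθ v θ r) := by
        congr! 2 with θ
        rw [scaledVorticity]
        ring
    _ = (∫ θ in a..b, u θ r * Dθ u θ r) + (∫ θ in a..b, scaledVorticity u v θ r * v θ r)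
          + ∫ θ in a..b, v θ r * Dθ v θ r := by
        rw [intervalIntegral.integral_add, intervalIntegral.integral_add] <;>
          exact Continuous.intervalIntegrable (by fun_prop) a b
    _ = 0 := by
        rw [hu_exact, h.integral_scaledVorticity_mul_eq_zero hr01 hr hue hue_ne hu hv hp hv0,
          hv_exact, add_zero, add_zero]

end Vorticity

/-- **Necessary solvability condition for the second-order linearized Euler system.**
If `(ū_e⁽¹⁾, v̄_e⁽¹⁾, p̄_e⁽¹⁾)` is a smooth `2π`-periodic solution of the first-order
linearized Euler system around the positive shear flow `u_e(r)` on `[0,2π] × [r₀,1]`,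
with `∫₀^{2π} v̄_e⁽¹⁾(θ,r) dθ = 0` for all `r`, then
`∫₀^{2π} [ū_e⁽¹⁾ ∂_θ ū_e⁽¹⁾ + v̄_e⁽¹⁾ r ∂_r ū_e⁽¹⁾ + ū_e⁽¹⁾ v̄_e⁽¹⁾] dθ = 0`
for every `r ∈ [r₀,1]`. -/
theorem second_order_euler_solvability_condition
    (r0 : ℝ) (hr0 : 0 < r0) (hr01 : r0 < 1)
    (ue : ℝ → ℝ) (hue : ContDiff ℝ (⊤ : ℕ∞) ue) (huepos : ∀ r ∈ Icc r0 1, 0 < ue r)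
    (u v p : ℝ → ℝ → ℝ)
    (hsu : Smooth2 u) (hsv : Smooth2 v) (hsp : Smooth2 p)
    (hpu : Periodic2 u) (hpv : Periodic2 v) (hpp : Periodic2 p)
    (heq : LinEuler1 r0 ue u v p)
    (hvzero : ∀ r ∈ Icc r0 1, (∫ θ in (0:ℝ)..(2 * π), v θ r) = 0) :
    ∀ r ∈ Icc r0 1,
      (∫ θ in (0:ℝ)..(2 * π),
        (u θ r * Dθ u θ r + v θ r * (r * Dr u θ r) + u θ r * v θ r)) = 0 := by
  intro r hr
  exact second_order_euler_solvability_condition_general heq hr01 hr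
    (contDiff_infty.1 hue 2) (huepos r hr).ne' (contDiff_infty.1 hsu 2) (contDiff_infty.1 hsv 2)
    (contDiff_infty.1 hsp 2) (by simpa using (hpu 0 r).symm) (by simpa using (hpv 0 r).symm)
    (hvzero r hr)
end
end

section
/- (H² estimate for the Stokes system) Let (u,v,p) be a smooth solution of the Stokes system on Ω=[0,2π]×[r_0,1]: −ε²(ru_{rr}+u_{θθ}/r+2v_θ/r+u_r−u/r)+p_θ=f_u, −ε²(rv_{rr}+v_{θθ}/r−2u_θ/r+v_r−v/r)+rp_r=g_v, u_θ+∂_r(rv)=0, with (u,v) 2π-periodic in θ and u=v=0 on r=r_0 and r=1. Then ∫_{r_0}^{1}∫₀^{2π}[(u_{θθ}+v_θ)²+(v_{θθ}−u_θ)²]dθdr + ∫_{r_0}^{1}∫₀^{2π}(u_{rθ}²+v_{rθ}²)dθdr ≤ (C/ε²)|∫_{r_0}^{1}∫₀^{2π}(f_u u_{θθ}+g_v v_{θθ})dθdr|. -/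
open Real MeasureTheory Filter Set

noncomputable section

/-!
The angular derivative `∂_θ` is the Lie derivative along rotations, so it preserves
incompressibility and the boundary condition. Testing the Stokes system with `(u_θθ, v_θθ)`
therefore kills the pressure, and with `W = u_θ e_θ + v_θ e_r` integration by parts gives the exact
identity `ε² ∫∫ r |∇W|² = -∫∫ (f_u u_θθ + g_v v_θθ)`. Since `r₀ ≤ r ≤ 1`, the energy density
`r |∇W|²` is at least `r₀` times the integrand to be estimated.
-/

open Function

section PartialDerivatives

variable {w f : ℝ → ℝ → ℝ} {m n : WithTop ℕ∞}

lemma Smooth2.contDiff (hw : Smooth2 w) (k : ℕ) : ContDiff ℝ k (uncurry w) :=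
  contDiff_infty.1 hw k

lemma hasDerivAt_dθ (hw : Differentiable ℝ (uncurry w)) (θ r : ℝ) :
    HasDerivAt (fun t => w t r) (Dθ w θ r) θ :=
  (hw.comp (differentiable_id.prodMk (differentiable_const r)) θ).hasDerivAt

lemma hasDerivAt_dr (hw : Differentiable ℝ (uncurry w)) (θ r : ℝ) :
    HasDerivAt (fun s => w θ s) (Dr w θ r) r :=
  (hw.comp ((differentiable_const θ).prodMk differentiable_id) r).hasDerivAt

lemma uncurry_dθ_eq_fderiv (hw : Differentiable ℝ (uncurry w)) :
    uncurry (Dθ w) = fun q => fderiv ℝ (uncurry w) q (1, 0) :=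
  funext fun q => ((hw q).hasFDerivAt.comp_hasDerivAt_of_eq q.1
    ((hasDerivAt_id q.1).prodMk (hasDerivAt_const q.1 q.2)) rfl).deriv

lemma uncurry_dr_eq_fderiv (hw : Differentiable ℝ (uncurry w)) :
    uncurry (Dr w) = fun q => fderiv ℝ (uncurry w) q (0, 1) :=
  funext fun q => ((hw q).hasFDerivAt.comp_hasDerivAt_of_eq q.2
    ((hasDerivAt_const q.2 q.1).prodMk (hasDerivAt_id q.2)) rfl).deriv

lemma contDiff_dθ (hw : ContDiff ℝ n (uncurry w)) (hmn : m + 1 ≤ n) :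
    ContDiff ℝ m (uncurry (Dθ w)) := by
  rw [uncurry_dθ_eq_fderiv ((hw.of_le (le_add_self.trans hmn)).differentiable one_ne_zero)]
  exact (hw.fderiv_right hmn).clm_apply contDiff_const

lemma contDiff_dr (hw : ContDiff ℝ n (uncurry w)) (hmn : m + 1 ≤ n) :
    ContDiff ℝ m (uncurry (Dr w)) := by
  rw [uncurry_dr_eq_fderiv ((hw.of_le (le_add_self.trans hmn)).differentiable one_ne_zero)]
  exact (hw.fderiv_right hmn).clm_apply contDiff_const

lemma continuous_dθ (hw : ContDiff ℝ 1 (uncurry w)) : Continuous (uncurry (Dθ w)) :=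
  (contDiff_dθ (m := 0) hw (by norm_num)).continuous

lemma continuous_dr (hw : ContDiff ℝ 1 (uncurry w)) : Continuous (uncurry (Dr w)) :=
  (contDiff_dr (m := 0) hw (by norm_num)).continuous

lemma dr_dθ_comm (hw : ContDiff ℝ 2 (uncurry w)) : Dr (Dθ w) = Dθ (Dr w) := by
  have hdiff : Differentiable ℝ (uncurry w) := hw.differentiable two_ne_zero
  have hfderiv : Differentiable ℝ (fderiv ℝ (uncurry w)) :=
    (hw.fderiv_right (m := 1) (by norm_num)).differentiable one_ne_zero
  have hdθ : Differentiable ℝ (uncurry (Dθ w)) :=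
    (contDiff_dθ (m := 1) hw (by norm_num)).differentiable one_ne_zero
  have hdr : Differentiable ℝ (uncurry (Dr w)) :=
    (contDiff_dr (m := 1) hw (by norm_num)).differentiable one_ne_zero
  funext θ r
  have hsymm : IsSymmSndFDerivAt ℝ (uncurry w) (θ, r) :=
    hw.contDiffAt.isSymmSndFDerivAt (by simp)
  change uncurry (Dr (Dθ w)) (θ, r) = uncurry (Dθ (Dr w)) (θ, r)
  rw [uncurry_dr_eq_fderiv hdθ, uncurry_dθ_eq_fderiv hdr, uncurry_dθ_eq_fderiv hdiff,
    uncurry_dr_eq_fderiv hdiff]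
  beta_reduce
  rw [fderiv_clm_apply (hfderiv _) (by fun_prop), fderiv_clm_apply (hfderiv _) (by fun_prop)]
  simpa using hsymm (0, 1) (1, 0)

lemma dr_id_mul (hf : Differentiable ℝ (uncurry f)) (θ r : ℝ) :
    Dr (fun t s => s * f t s) θ r = f θ r + r * Dr f θ r :=
  (((hasDerivAt_id r).mul (hasDerivAt_dr hf θ r)).deriv).trans (by simp)

lemma dθ_eq_zero {r : ℝ} (hw : ∀ θ, w θ r = 0) (θ : ℝ) : Dθ w θ r = 0 := by
  simp only [Dθ, hw, deriv_const']

lemma Periodic2.dθ (hw : Periodic2 w) : Periodic2 (Dθ w) := fun θ r => by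
  simp only [Dθ, ← deriv_comp_add_const, hw _ r]

lemma Periodic2.dr (hw : Periodic2 w) : Periodic2 (Dr w) := fun θ r => by
  simp only [Dr, hw θ]

lemma Periodic2.two_pi_eq_zero (hw : Periodic2 w) (r : ℝ) : w (2 * π) r = w 0 r := by
  simpa using hw 0 r

end PartialDerivatives

section DoubleIntegral

variable {r0 : ℝ} {F G H f g : ℝ → ℝ → ℝ}

/-- The domain `Ω` in polar coordinates, angle first. -/
def polarRect (r0 : ℝ) : Set (ℝ × ℝ) := Icc 0 (2 * π) ×ˢ Icc r0 1

lemma integrableOn_polarRect (hF : ContinuousOn (uncurry F) (polarRect r0)) :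
    IntegrableOn (uncurry F) (polarRect r0) :=
  hF.integrableOn_compact (isCompact_Icc.prod isCompact_Icc)

lemma dblInt_eq_integral_integral (hr : r0 ≤ 1) (F : ℝ → ℝ → ℝ) :
    dblInt r0 F = ∫ r in Icc r0 1, ∫ θ in Icc 0 (2 * π), F θ r := by
  simp only [dblInt, intervalIntegral.integral_of_le hr,
    intervalIntegral.integral_of_le two_pi_pos.le, integral_Icc_eq_integral_Ioc]

lemma dblInt_eq_setIntegral (hr : r0 ≤ 1) (hF : IntegrableOn (uncurry F) (polarRect r0)) :
    dblInt r0 F = ∫ q in polarRect r0, uncurry F q := by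
  rw [dblInt_eq_integral_integral hr, polarRect, Measure.volume_eq_prod, ← setIntegral_prod_swap]
  exact (setIntegral_prod _ hF.swap).symm

lemma dblInt_swap (hr : r0 ≤ 1) (hF : IntegrableOn (uncurry F) (polarRect r0)) :
    dblInt r0 F = ∫ θ in (0 : ℝ)..(2 * π), ∫ r in r0..1, F θ r := by
  simp only [dblInt_eq_setIntegral hr hF, intervalIntegral.integral_of_le hr,
    intervalIntegral.integral_of_le two_pi_pos.le, ← integral_Icc_eq_integral_Ioc]
  exact setIntegral_prod _ hF

lemma dblInt_congr (hr : r0 ≤ 1) (h : ∀ θ, ∀ r ∈ Icc r0 1, F θ r = G θ r) :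
    dblInt r0 F = dblInt r0 G := by
  refine intervalIntegral.integral_congr fun r hr' => ?_
  rw [uIcc_of_le hr] at hr'
  simp only [h _ r hr']

lemma dblInt_const_mul (c : ℝ) (F : ℝ → ℝ → ℝ) :
    dblInt r0 (fun θ r => c * F θ r) = c * dblInt r0 F := by
  simp only [dblInt, intervalIntegral.integral_const_mul]

lemma dblInt_add (hr : r0 ≤ 1) (hF : IntegrableOn (uncurry F) (polarRect r0))
    (hG : IntegrableOn (uncurry G) (polarRect r0)) :
    dblInt r0 (fun θ r => F θ r + G θ r) = dblInt r0 F + dblInt r0 G := by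
  rw [dblInt_eq_setIntegral hr hF, dblInt_eq_setIntegral hr hG, ← integral_add hF hG]
  exact dblInt_eq_setIntegral hr (hF.add hG)

lemma dblInt_add_add (hr : r0 ≤ 1) (hF : IntegrableOn (uncurry F) (polarRect r0))
    (hG : IntegrableOn (uncurry G) (polarRect r0)) (hH : IntegrableOn (uncurry H) (polarRect r0)) :
    dblInt r0 (fun θ r => F θ r + G θ r + H θ r) = dblInt r0 F + dblInt r0 G + dblInt r0 H := by
  rw [← dblInt_add hr hF hG]
  exact dblInt_add hr (hF.add hG) hH

lemma dblInt_mono (hr : r0 ≤ 1) (hF : IntegrableOn (uncurry F) (polarRect r0))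
    (hG : IntegrableOn (uncurry G) (polarRect r0)) (h : ∀ θ, ∀ r ∈ Icc r0 1, F θ r ≤ G θ r) :
    dblInt r0 F ≤ dblInt r0 G := by
  rw [dblInt_eq_setIntegral hr hF, dblInt_eq_setIntegral hr hG]
  exact setIntegral_mono_on hF hG (measurableSet_Icc.prod measurableSet_Icc)
    fun q hq => h q.1 q.2 hq.2

lemma dblInt_weight_mul_mul_dθ (k : ℝ → ℝ) (hf : ContDiff ℝ 1 (uncurry f))
    (hg : ContDiff ℝ 1 (uncurry g)) (pf : Periodic2 f) (pg : Periodic2 g) :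
    dblInt r0 (fun θ r => k r * (f θ r * Dθ g θ r)) =
      -dblInt r0 (fun θ r => k r * (Dθ f θ r * g θ r)) := by
  have parts (r : ℝ) : ∫ θ in (0 : ℝ)..(2 * π), f θ r * Dθ g θ r =
      -∫ θ in (0 : ℝ)..(2 * π), Dθ f θ r * g θ r := by
    rw [intervalIntegral.integral_mul_deriv_eq_deriv_mul
      (fun θ _ => hasDerivAt_dθ (hf.differentiable one_ne_zero) θ r)
      (fun θ _ => hasDerivAt_dθ (hg.differentiable one_ne_zero) θ r)
      ((continuous_dθ hf).uncurry_right r |>.intervalIntegrable _ _)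
      ((continuous_dθ hg).uncurry_right r |>.intervalIntegrable _ _),
      pf.two_pi_eq_zero, pg.two_pi_eq_zero, sub_self, zero_sub]
  simp only [dblInt, intervalIntegral.integral_const_mul, parts, mul_neg,
    intervalIntegral.integral_neg]

lemma dblInt_mul_dr (hr : r0 ≤ 1) (hf : ContDiff ℝ 1 (uncurry f)) (hg : ContDiff ℝ 1 (uncurry g))
    (hbdry : ∀ θ, f θ 1 * g θ 1 = f θ r0 * g θ r0) :
    dblInt r0 (fun θ r => f θ r * Dr g θ r) = -dblInt r0 (fun θ r => Dr f θ r * g θ r) := by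
  have cf := hf.continuous
  have cg := hg.continuous
  have cfr := continuous_dr hf
  have cgr := continuous_dr hg
  have parts (θ : ℝ) : ∫ r in r0..1, f θ r * Dr g θ r = -∫ r in r0..1, Dr f θ r * g θ r := by
    rw [intervalIntegral.integral_mul_deriv_eq_deriv_mul
      (fun r _ => hasDerivAt_dr (hf.differentiable one_ne_zero) θ r)
      (fun r _ => hasDerivAt_dr (hg.differentiable one_ne_zero) θ r)
      (cfr.uncurry_left θ |>.intervalIntegrable _ _)
      (cgr.uncurry_left θ |>.intervalIntegrable _ _),
      hbdry, sub_self, zero_sub]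
  rw [dblInt_swap hr (integrableOn_polarRect (by fun_prop)),
    dblInt_swap hr (integrableOn_polarRect (by fun_prop))]
  simp only [parts, intervalIntegral.integral_neg]

end DoubleIntegral

section Stokes

variable {r0 ε : ℝ} {u v p w a b : ℝ → ℝ → ℝ}

/-- The incompressibility condition `u_θ + ∂_r (r v) = 0` on `Ω`, for the vector field with
angular component `u` and radial component `v`. -/
def IsSolenoidal (r0 : ℝ) (u v : ℝ → ℝ → ℝ) : Prop :=
  ∀ θ r, r ∈ Icc r0 1 → Dθ u θ r + Dr (fun t s => s * v t s) θ r = 0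

/-- The diffusion operator `r (Δ - r⁻²)` acting on each component of a vector field in the polar
frame. -/
def polarDiffusion (w : ℝ → ℝ → ℝ) : ℝ → ℝ → ℝ := fun θ r =>
  r * Dr (Dr w) θ r + Dθ (Dθ w) θ r / r + Dr w θ r - w θ r / r

/-- The left-hand side of the angular momentum equation, multiplied by `r` as in the paper. -/
def stokesAngular (ε : ℝ) (u v p : ℝ → ℝ → ℝ) : ℝ → ℝ → ℝ := fun θ r =>
  -ε ^ 2 * (r * Dr (Dr u) θ r + Dθ (Dθ u) θ r / r + 2 * Dθ v θ r / r + Dr u θ r - u θ r / r)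
    + Dθ p θ r

/-- The left-hand side of the radial momentum equation, multiplied by `r` as in the paper. -/
def stokesRadial (ε : ℝ) (u v p : ℝ → ℝ → ℝ) : ℝ → ℝ → ℝ := fun θ r =>
  -ε ^ 2 * (r * Dr (Dr v) θ r + Dθ (Dθ v) θ r / r - 2 * Dθ u θ r / r + Dr v θ r - v θ r / r)
    + r * Dr p θ r

/-- The contribution of a single component `w` to `angularEnergy`. -/
def componentEnergy (w : ℝ → ℝ → ℝ) : ℝ → ℝ → ℝ := fun θ r =>
  r * (Dr (Dθ w) θ r) ^ 2 + ((Dθ (Dθ w) θ r) ^ 2 + (Dθ w θ r) ^ 2) / r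

/-- The interaction of the two components in `angularEnergy`, caused by the rotation of the polar
frame. -/
def frameCoupling (u v : ℝ → ℝ → ℝ) : ℝ → ℝ → ℝ := fun θ r =>
  2 * (Dθ v θ r * Dθ (Dθ u) θ r - Dθ u θ r * Dθ (Dθ v) θ r) / r

/-- The density `r |∇W|²`, with respect to `dθ dr`, of the Dirichlet energy of the vector field
`W = u_θ e_θ + v_θ e_r`. Its zeroth-order terms come from differentiating `e_θ` and `e_r`. -/
def angularEnergy (u v : ℝ → ℝ → ℝ) : ℝ → ℝ → ℝ := fun θ r =>
  r * ((Dr (Dθ u) θ r) ^ 2 + (Dr (Dθ v) θ r) ^ 2) +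
    ((Dθ (Dθ u) θ r + Dθ v θ r) ^ 2 + (Dθ (Dθ v) θ r - Dθ u θ r) ^ 2) / r

lemma IsSolenoidal.dθ (hu : ContDiff ℝ 2 (uncurry u)) (hv : ContDiff ℝ 2 (uncurry v))
    (h : IsSolenoidal r0 u v) : IsSolenoidal r0 (Dθ u) (Dθ v) := by
  intro θ r hr
  have hrv : ContDiff ℝ 2 (uncurry fun t s => s * v t s) := by fun_prop
  have hrvθ : Dθ (fun t s => s * v t s) = fun t s => s * Dθ v t s := by
    funext t s
    exact deriv_const_mul s (hasDerivAt_dθ (hv.differentiable two_ne_zero) t s).differentiableAt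
  have huθ := hasDerivAt_dθ ((contDiff_dθ (m := 1) hu (by norm_num)).differentiable one_ne_zero) θ r
  have hrvr := hasDerivAt_dθ
    ((contDiff_dr (m := 1) hrv (by norm_num)).differentiable one_ne_zero) θ r
  rw [← hrvθ, dr_dθ_comm hrv]
  refine (huθ.add hrvr).unique ?_
  exact (hasDerivAt_const θ (0 : ℝ)).congr_of_eventuallyEq (.of_forall fun t => h t r hr)

lemma dblInt_pressure_eq_zero (hr : r0 ≤ 1) (hp : ContDiff ℝ 1 (uncurry p))
    (ha : ContDiff ℝ 1 (uncurry a)) (hb : ContDiff ℝ 1 (uncurry b))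
    (pp : Periodic2 p) (pa : Periodic2 a) (hsol : IsSolenoidal r0 a b)
    (hb_inner : ∀ θ, b θ r0 = 0) (hb_outer : ∀ θ, b θ 1 = 0) :
    dblInt r0 (fun θ r => a θ r * Dθ p θ r + r * b θ r * Dr p θ r) = 0 := by
  have hrb : ContDiff ℝ 1 (uncurry fun t s => s * b t s) := by fun_prop
  have := hp.continuous
  have := ha.continuous
  have := hb.continuous
  have := continuous_dθ hp
  have := continuous_dr hp
  have := continuous_dθ ha
  have := continuous_dr hrb
  calc dblInt r0 (fun θ r => a θ r * Dθ p θ r + r * b θ r * Dr p θ r)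
      = dblInt r0 (fun θ r => a θ r * Dθ p θ r) + dblInt r0 (fun θ r => r * b θ r * Dr p θ r) :=
        dblInt_add hr (integrableOn_polarRect (by fun_prop)) (integrableOn_polarRect (by fun_prop))
    _ = -dblInt r0 (fun θ r => Dθ a θ r * p θ r) +
          -dblInt r0 (fun θ r => Dr (fun t s => s * b t s) θ r * p θ r) := by
        congr 1
        · simpa only [one_mul] using dblInt_weight_mul_mul_dθ (fun _ => 1) ha hp pa pp
        · exact dblInt_mul_dr hr hrb hp (by simp [hb_inner, hb_outer])
    _ = -dblInt r0 (fun θ r => Dθ a θ r * p θ r + Dr (fun t s => s * b t s) θ r * p θ r) := by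
        rw [dblInt_add hr (integrableOn_polarRect (by fun_prop))
          (integrableOn_polarRect (by fun_prop)), neg_add]
    _ = -dblInt r0 (fun _ _ => 0) := by
        congr 1
        refine dblInt_congr hr fun θ r hr' => ?_
        rw [← add_mul, hsol θ r hr', zero_mul]
    _ = 0 := by simp [dblInt]

lemma dblInt_radialDiffusion (hr : r0 ≤ 1) (hw : ContDiff ℝ 3 (uncurry w)) (pw : Periodic2 w)
    (hw_inner : ∀ θ, Dθ (Dθ w) θ r0 = 0) (hw_outer : ∀ θ, Dθ (Dθ w) θ 1 = 0) :
    dblInt r0 (fun θ r => Dθ (Dθ w) θ r * Dr (fun t s => s * Dr w t s) θ r) =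
      dblInt r0 (fun θ r => r * (Dr (Dθ w) θ r) ^ 2) := by
  have hwr : ContDiff ℝ 2 (uncurry (Dr w)) := contDiff_dr hw (by norm_num)
  have hwθ : ContDiff ℝ 2 (uncurry (Dθ w)) := contDiff_dθ hw (by norm_num)
  have hwθθ : ContDiff ℝ 1 (uncurry (Dθ (Dθ w))) := contDiff_dθ hwθ (by norm_num)
  have hwrθ : ContDiff ℝ 1 (uncurry (Dθ (Dr w))) := contDiff_dθ hwr (by norm_num)
  have hwr1 : ContDiff ℝ 1 (uncurry (Dr w)) := hwr.of_le (by norm_num)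
  have hcomm : Dr (Dθ w) = Dθ (Dr w) := dr_dθ_comm (hw.of_le (by norm_num))
  calc dblInt r0 (fun θ r => Dθ (Dθ w) θ r * Dr (fun t s => s * Dr w t s) θ r)
      = -dblInt r0 (fun θ r => Dr (Dθ (Dθ w)) θ r * (r * Dr w θ r)) :=
        dblInt_mul_dr hr hwθθ (by fun_prop) (by simp [hw_inner, hw_outer])
    _ = -dblInt r0 (fun θ r => r * (Dθ (Dθ (Dr w)) θ r * Dr w θ r)) := by
        simp only [dr_dθ_comm hwθ, hcomm, mul_left_comm]
    _ = dblInt r0 (fun θ r => r * (Dr (Dθ w) θ r) ^ 2) := by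
        rw [← dblInt_weight_mul_mul_dθ (fun r => r) hwrθ hwr1 pw.dr.dθ pw.dr]
        simp only [hcomm, sq]

lemma snd_ne_zero_of_mem_polarRect (hr0 : 0 < r0) : ∀ q ∈ polarRect r0, q.2 ≠ 0 :=
  fun _ hq => (hr0.trans_le hq.2.1).ne'

lemma integrableOn_polarDiffusion_mul (hr0 : 0 < r0) (hw : ContDiff ℝ 2 (uncurry w)) :
    IntegrableOn (uncurry fun θ r => polarDiffusion w θ r * Dθ (Dθ w) θ r) (polarRect r0) := by
  have hwr : ContDiff ℝ 1 (uncurry (Dr w)) := contDiff_dr hw (by norm_num)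
  have := hw.continuous
  have := hwr.continuous
  have := continuous_dr hwr
  have := continuous_dθ (contDiff_dθ hw (by norm_num))
  have := snd_ne_zero_of_mem_polarRect hr0
  exact integrableOn_polarRect (by unfold polarDiffusion; fun_prop (disch := assumption))

lemma integrableOn_componentEnergy (hr0 : 0 < r0) (hw : ContDiff ℝ 2 (uncurry w)) :
    IntegrableOn (uncurry (componentEnergy w)) (polarRect r0) := by
  have hwθ : ContDiff ℝ 1 (uncurry (Dθ w)) := contDiff_dθ hw (by norm_num)
  have := hwθ.continuous
  have := continuous_dθ hwθ
  have := continuous_dr hwθ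
  have := snd_ne_zero_of_mem_polarRect hr0
  exact integrableOn_polarRect (by unfold componentEnergy; fun_prop (disch := assumption))

lemma integrableOn_frameCoupling (hr0 : 0 < r0) (hu : ContDiff ℝ 2 (uncurry u))
    (hv : ContDiff ℝ 2 (uncurry v)) :
    IntegrableOn (uncurry (frameCoupling u v)) (polarRect r0) := by
  have huθ : ContDiff ℝ 1 (uncurry (Dθ u)) := contDiff_dθ hu (by norm_num)
  have hvθ : ContDiff ℝ 1 (uncurry (Dθ v)) := contDiff_dθ hv (by norm_num)
  have := huθ.continuous
  have := hvθ.continuous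
  have := continuous_dθ huθ
  have := continuous_dθ hvθ
  have := snd_ne_zero_of_mem_polarRect hr0
  exact integrableOn_polarRect (by unfold frameCoupling; fun_prop (disch := assumption))

lemma angularEnergy_eq (u v : ℝ → ℝ → ℝ) :
    angularEnergy u v = fun θ r =>
      componentEnergy u θ r + componentEnergy v θ r + frameCoupling u v θ r := by
  funext θ r
  simp only [angularEnergy, componentEnergy, frameCoupling]
  ring

lemma integrableOn_angularEnergy (hr0 : 0 < r0) (hu : ContDiff ℝ 2 (uncurry u))
    (hv : ContDiff ℝ 2 (uncurry v)) :
    IntegrableOn (uncurry (angularEnergy u v)) (polarRect r0) := by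
  rw [angularEnergy_eq]
  exact ((integrableOn_componentEnergy hr0 hu).add (integrableOn_componentEnergy hr0 hv)).add
    (integrableOn_frameCoupling hr0 hu hv)

lemma dblInt_angularEnergy (hr0 : 0 < r0) (hr : r0 ≤ 1) (hu : ContDiff ℝ 2 (uncurry u))
    (hv : ContDiff ℝ 2 (uncurry v)) :
    dblInt r0 (angularEnergy u v) = dblInt r0 (componentEnergy u) +
      dblInt r0 (componentEnergy v) + dblInt r0 (frameCoupling u v) := by
  rw [angularEnergy_eq, dblInt_add_add hr (integrableOn_componentEnergy hr0 hu)
    (integrableOn_componentEnergy hr0 hv) (integrableOn_frameCoupling hr0 hu hv)]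

lemma dblInt_polarDiffusion (hr0 : 0 < r0) (hr : r0 ≤ 1) (hw : ContDiff ℝ 3 (uncurry w))
    (pw : Periodic2 w)
    (hw_inner : ∀ θ, Dθ (Dθ w) θ r0 = 0) (hw_outer : ∀ θ, Dθ (Dθ w) θ 1 = 0) :
    dblInt r0 (fun θ r => polarDiffusion w θ r * Dθ (Dθ w) θ r) =
      dblInt r0 (componentEnergy w) := by
  have hw2 : ContDiff ℝ 2 (uncurry w) := hw.of_le (by norm_num)
  have hw1 : ContDiff ℝ 1 (uncurry w) := hw.of_le (by norm_num)
  have hwr : ContDiff ℝ 1 (uncurry (Dr w)) := contDiff_dr hw2 (by norm_num)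
  have hwθ : ContDiff ℝ 1 (uncurry (Dθ w)) := contDiff_dθ hw2 (by norm_num)
  have hrwr : ContDiff ℝ 1 (uncurry fun t s => s * Dr w t s) := by fun_prop
  have := hw.continuous
  have := hwθ.continuous
  have := continuous_dθ hwθ
  have := continuous_dr hwθ
  have := continuous_dr hrwr
  have hne := snd_ne_zero_of_mem_polarRect hr0
  have zeroth_order : dblInt r0 (fun θ r => r⁻¹ * (w θ r * Dθ (Dθ w) θ r)) =
      -dblInt r0 (fun θ r => r⁻¹ * (Dθ w θ r * Dθ w θ r)) :=
    dblInt_weight_mul_mul_dθ (fun r => r⁻¹) hw1 hwθ pw pw.dθ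
  have tested : dblInt r0 (fun θ r => polarDiffusion w θ r * Dθ (Dθ w) θ r) +
      dblInt r0 (fun θ r => r⁻¹ * (w θ r * Dθ (Dθ w) θ r)) =
      dblInt r0 (fun θ r => Dθ (Dθ w) θ r * Dr (fun t s => s * Dr w t s) θ r) +
        dblInt r0 (fun θ r => (Dθ (Dθ w) θ r) ^ 2 / r) := by
    rw [← dblInt_add hr (integrableOn_polarDiffusion_mul hr0 hw2)
        (integrableOn_polarRect (by fun_prop (disch := assumption))),
      ← dblInt_add hr (integrableOn_polarRect (by fun_prop))
        (integrableOn_polarRect (by fun_prop (disch := assumption)))]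
    refine dblInt_congr hr fun θ r _ => ?_
    rw [polarDiffusion, dr_id_mul (hwr.differentiable one_ne_zero)]
    ring
  have energy : dblInt r0 (componentEnergy w) =
      dblInt r0 (fun θ r => r * (Dr (Dθ w) θ r) ^ 2) +
        (dblInt r0 (fun θ r => (Dθ (Dθ w) θ r) ^ 2 / r) +
          dblInt r0 (fun θ r => r⁻¹ * (Dθ w θ r * Dθ w θ r))) := by
    rw [← dblInt_add hr (integrableOn_polarRect (by fun_prop (disch := assumption)))
        (integrableOn_polarRect (by fun_prop (disch := assumption))),
      ← dblInt_add hr (integrableOn_polarRect (by fun_prop))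
        (integrableOn_polarRect (by fun_prop (disch := assumption)))]
    refine dblInt_congr hr fun θ r _ => ?_
    rw [componentEnergy]
    ring
  rw [energy, ← dblInt_radialDiffusion hr hw pw hw_inner hw_outer]
  linarith

lemma dblInt_stokes_eq_neg_angularEnergy (hr0 : 0 < r0) (hr : r0 ≤ 1)
    (hu : ContDiff ℝ 3 (uncurry u)) (hv : ContDiff ℝ 3 (uncurry v)) (hp : ContDiff ℝ 1 (uncurry p))
    (pu : Periodic2 u) (pv : Periodic2 v) (pp : Periodic2 p) (hsol : IsSolenoidal r0 u v)
    (hu_inner : ∀ θ, Dθ (Dθ u) θ r0 = 0) (hu_outer : ∀ θ, Dθ (Dθ u) θ 1 = 0)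
    (hv_inner : ∀ θ, Dθ (Dθ v) θ r0 = 0) (hv_outer : ∀ θ, Dθ (Dθ v) θ 1 = 0) :
    dblInt r0 (fun θ r => stokesAngular ε u v p θ r * Dθ (Dθ u) θ r +
        stokesRadial ε u v p θ r * Dθ (Dθ v) θ r) =
      -ε ^ 2 * dblInt r0 (angularEnergy u v) := by
  have hu2 : ContDiff ℝ 2 (uncurry u) := hu.of_le (by norm_num)
  have hv2 : ContDiff ℝ 2 (uncurry v) := hv.of_le (by norm_num)
  have huθ : ContDiff ℝ 2 (uncurry (Dθ u)) := contDiff_dθ hu (by norm_num)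
  have hvθ : ContDiff ℝ 2 (uncurry (Dθ v)) := contDiff_dθ hv (by norm_num)
  have huθθ : ContDiff ℝ 1 (uncurry (Dθ (Dθ u))) := contDiff_dθ huθ (by norm_num)
  have hvθθ : ContDiff ℝ 1 (uncurry (Dθ (Dθ v))) := contDiff_dθ hvθ (by norm_num)
  have := huθθ.continuous
  have := hvθθ.continuous
  have := continuous_dθ hp
  have := continuous_dr hp
  have iu := integrableOn_polarDiffusion_mul hr0 hu2
  have iv := integrableOn_polarDiffusion_mul hr0 hv2
  have icoup := integrableOn_frameCoupling hr0 hu2 hv2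
  have viscous : IntegrableOn (uncurry fun θ r => -ε ^ 2 *
      (polarDiffusion u θ r * Dθ (Dθ u) θ r + polarDiffusion v θ r * Dθ (Dθ v) θ r +
        frameCoupling u v θ r)) (polarRect r0) := ((iu.add iv).add icoup).const_mul _
  have pressure := dblInt_pressure_eq_zero hr hp huθθ hvθθ pp pu.dθ.dθ
    ((hsol.dθ hu2 hv2).dθ huθ hvθ) hv_inner hv_outer
  calc _ = dblInt r0 (fun θ r => (Dθ (Dθ u) θ r * Dθ p θ r + r * Dθ (Dθ v) θ r * Dr p θ r) +
          -ε ^ 2 * (polarDiffusion u θ r * Dθ (Dθ u) θ r + polarDiffusion v θ r * Dθ (Dθ v) θ r +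
            frameCoupling u v θ r)) := by
        refine dblInt_congr hr fun θ r _ => ?_
        simp only [stokesAngular, stokesRadial, polarDiffusion, frameCoupling]
        ring
    _ = -ε ^ 2 * (dblInt r0 (fun θ r => polarDiffusion u θ r * Dθ (Dθ u) θ r) +
          dblInt r0 (fun θ r => polarDiffusion v θ r * Dθ (Dθ v) θ r) +
          dblInt r0 (frameCoupling u v)) := by
        rw [dblInt_add hr (integrableOn_polarRect (by fun_prop)) viscous, dblInt_const_mul,
          dblInt_add_add hr iu iv icoup, pressure, zero_add]
    _ = -ε ^ 2 * dblInt r0 (angularEnergy u v) := by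
        rw [dblInt_polarDiffusion hr0 hr hu pu hu_inner hu_outer,
          dblInt_polarDiffusion hr0 hr hv pv hv_inner hv_outer, dblInt_angularEnergy hr0 hr hu2 hv2]

lemma add_le_one_div_mul_angularEnergy (hr0 : 0 < r0) {r : ℝ} (hr : r ∈ Icc r0 1) (θ : ℝ) :
    ((Dθ (Dθ u) θ r + Dθ v θ r) ^ 2 + (Dθ (Dθ v) θ r - Dθ u θ r) ^ 2) +
        ((Dr (Dθ u) θ r) ^ 2 + (Dr (Dθ v) θ r) ^ 2) ≤
      1 / r0 * angularEnergy u v θ r := by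
  have hrpos : 0 < r := hr0.trans_le hr.1
  rw [one_div_mul_eq_div, le_div_iff₀' hr0, mul_add, add_comm]
  refine add_le_add (mul_le_mul_of_nonneg_right hr.1 (by positivity)) ?_
  refine (mul_le_of_le_one_left (by positivity) (hr.1.trans hr.2)).trans ?_
  exact le_div_self (by positivity) hrpos hr.2

lemma dblInt_add_dblInt_le_angularEnergy (hr0 : 0 < r0) (hr : r0 ≤ 1)
    (hu : ContDiff ℝ 2 (uncurry u)) (hv : ContDiff ℝ 2 (uncurry v)) :
    dblInt r0 (fun θ r => (Dθ (Dθ u) θ r + Dθ v θ r) ^ 2 + (Dθ (Dθ v) θ r - Dθ u θ r) ^ 2) +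
        dblInt r0 (fun θ r => (Dr (Dθ u) θ r) ^ 2 + (Dr (Dθ v) θ r) ^ 2) ≤
      1 / r0 * dblInt r0 (angularEnergy u v) := by
  have huθ : ContDiff ℝ 1 (uncurry (Dθ u)) := contDiff_dθ hu (by norm_num)
  have hvθ : ContDiff ℝ 1 (uncurry (Dθ v)) := contDiff_dθ hv (by norm_num)
  have := huθ.continuous
  have := hvθ.continuous
  have := continuous_dθ huθ
  have := continuous_dθ hvθ
  have := continuous_dr huθ
  have := continuous_dr hvθ
  rw [← dblInt_add hr (integrableOn_polarRect (by fun_prop)) (integrableOn_polarRect (by fun_prop)),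
    ← dblInt_const_mul]
  exact dblInt_mono hr (integrableOn_polarRect (by fun_prop))
    ((integrableOn_angularEnergy hr0 hu hv).const_mul _)
    fun θ r hr' => add_le_one_div_mul_angularEnergy hr0 hr' θ

/-- The boundary condition says that `u` and `v` are constant on each boundary circle, as for
rotating or porous cylinders. -/
theorem stokes_H2_estimate_general (hr0 : 0 < r0) (hr : r0 ≤ 1) (hε : ε ≠ 0) {fu gv : ℝ → ℝ → ℝ}
    (hu : ContDiff ℝ 3 (uncurry u)) (hv : ContDiff ℝ 3 (uncurry v)) (hp : ContDiff ℝ 1 (uncurry p))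
    (pu : Periodic2 u) (pv : Periodic2 v) (pp : Periodic2 p)
    (angular : ∀ θ r, r ∈ Icc r0 1 → stokesAngular ε u v p θ r = fu θ r)
    (radial : ∀ θ r, r ∈ Icc r0 1 → stokesRadial ε u v p θ r = gv θ r)
    (hsol : IsSolenoidal r0 u v)
    (hu_outer : ∀ θ, Dθ u θ 1 = 0) (hv_outer : ∀ θ, Dθ v θ 1 = 0)
    (hu_inner : ∀ θ, Dθ u θ r0 = 0) (hv_inner : ∀ θ, Dθ v θ r0 = 0) :
    dblInt r0 (fun θ r => (Dθ (Dθ u) θ r + Dθ v θ r) ^ 2 + (Dθ (Dθ v) θ r - Dθ u θ r) ^ 2) +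
        dblInt r0 (fun θ r => (Dr (Dθ u) θ r) ^ 2 + (Dr (Dθ v) θ r) ^ 2) ≤
      1 / r0 / ε ^ 2 *
        |dblInt r0 (fun θ r => fu θ r * Dθ (Dθ u) θ r + gv θ r * Dθ (Dθ v) θ r)| := by
  have hε2 : 0 < ε ^ 2 := by positivity
  have energy := dblInt_stokes_eq_neg_angularEnergy (ε := ε) hr0 hr hu hv hp pu pv pp hsol
    (dθ_eq_zero hu_inner) (dθ_eq_zero hu_outer) (dθ_eq_zero hv_inner) (dθ_eq_zero hv_outer)
  have forces : dblInt r0 (fun θ r => fu θ r * Dθ (Dθ u) θ r + gv θ r * Dθ (Dθ v) θ r) =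
      -ε ^ 2 * dblInt r0 (angularEnergy u v) := by
    rw [← energy]
    refine dblInt_congr hr fun θ r hr' => ?_
    rw [angular θ r hr', radial θ r hr']
  rw [forces, neg_mul, abs_neg, abs_mul, abs_of_pos hε2, ← mul_assoc, div_mul_cancel₀ _ hε2.ne']
  calc _ ≤ 1 / r0 * dblInt r0 (angularEnergy u v) :=
        dblInt_add_dblInt_le_angularEnergy hr0 hr (hu.of_le (by norm_num)) (hv.of_le (by norm_num))
    _ ≤ 1 / r0 * |dblInt r0 (angularEnergy u v)| :=
        mul_le_mul_of_nonneg_left (le_abs_self _) (one_div_nonneg.2 hr0.le)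

end Stokes

/-- **"H²-type" estimate for the Stokes system** on the annulus `Ω = [0,2π] × [r₀,1]`:
for any smooth `2π`-periodic solution `(u,v,p)` of the Stokes system with no-slip boundary
conditions,
`∫∫ [(u_θθ + v_θ)² + (v_θθ − u_θ)²] + ∫∫ (u_rθ² + v_rθ²) ≤ (C/ε²)|∫∫ (f_u u_θθ + g_v v_θθ)|`. -/
theorem stokes_H2_estimate
    (r0 : ℝ) (hr0 : 0 < r0) (hr01 : r0 < 1) :
    ∃ C : ℝ, 0 < C ∧
      ∀ ε : ℝ, 0 < ε →
      ∀ u v p fu gv : ℝ → ℝ → ℝ,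
        Smooth2 u → Smooth2 v → Smooth2 p → Smooth2 fu → Smooth2 gv →
        Periodic2 u → Periodic2 v → Periodic2 p → Periodic2 fu → Periodic2 gv →
        (∀ θ r, r ∈ Icc r0 1 →
          -ε ^ 2 * (r * Dr (Dr u) θ r + Dθ (Dθ u) θ r / r + 2 * Dθ v θ r / r
              + Dr u θ r - u θ r / r)
            + Dθ p θ r = fu θ r) →
        (∀ θ r, r ∈ Icc r0 1 →
          -ε ^ 2 * (r * Dr (Dr v) θ r + Dθ (Dθ v) θ r / r - 2 * Dθ u θ r / r
              + Dr v θ r - v θ r / r)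
            + r * Dr p θ r = gv θ r) →
        (∀ θ r, r ∈ Icc r0 1 → Dθ u θ r + Dr (fun t s => s * v t s) θ r = 0) →
        (∀ θ, u θ 1 = 0) → (∀ θ, v θ 1 = 0) →
        (∀ θ, u θ r0 = 0) → (∀ θ, v θ r0 = 0) →
        dblInt r0 (fun θ r =>
            (Dθ (Dθ u) θ r + Dθ v θ r) ^ 2 + (Dθ (Dθ v) θ r - Dθ u θ r) ^ 2)
          + dblInt r0 (fun θ r => (Dr (Dθ u) θ r) ^ 2 + (Dr (Dθ v) θ r) ^ 2)
          ≤ (C / ε ^ 2) *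
            |dblInt r0 (fun θ r => fu θ r * Dθ (Dθ u) θ r + gv θ r * Dθ (Dθ v) θ r)| :=
  ⟨1 / r0, one_div_pos.2 hr0, fun _ hε _ _ _ _ _ hu hv hp _ _ pu pv pp _ _ angular radial hsol
    hu_outer hv_outer hu_inner hv_inner =>
    stokes_H2_estimate_general hr0 hr01.le hε.ne' (hu.contDiff 3) (hv.contDiff 3)
      (mod_cast hp.contDiff 1) pu pv pp angular radial hsol (dθ_eq_zero hu_outer)
      (dθ_eq_zero hv_outer) (dθ_eq_zero hu_inner) (dθ_eq_zero hv_inner)⟩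
end
end
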